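/- arXiv:2303.09804 — 4 statements merged into one kernel-verified Lean document; each statement's English description precedes it below -/
import Mathlib

section
/- For n ≥ 3, the virtual triplet group VL_n is isomorphic to the group with presentation with generating set {y_1, ρ_1, ρ_2, …, ρ_{n-1}} and defining relations: y_1² = 1; ρ_i² = 1 for 1 ≤ i ≤ n-1; ρ_i ρ_j = ρ_j ρ_i for |i-j| ≥ 2; ρ_i ρ_{i+1} ρ_i = ρ_{i+1} ρ_i ρ_{i+1} for 1 ≤ i ≤ n-2; ρ_i y_1 = y_1 ρ_i for i ≥ 3; and (y_1 ρ_1 ρ_2 y_1 ρ_2 ρ_1)³ = 1, via the map sending y_1 and each ρ_i of VL_n to the corresponding generators. -/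
/-! The mixed relation `ρᵢ yᵢ₊₁ ρᵢ = ρᵢ₊₁ yᵢ ρᵢ₊₁` says exactly that `yᵢ₊₁` is the conjugate of
`yᵢ` by `ρᵢ ρᵢ₊₁`, so it eliminates all `yᵢ` with `i ≥ 2`, and `(y₁ y₂)³ = 1` becomes the last
relation of the reduced presentation. It remains to see that the elements `redY y p k` defined in
the reduced group by iterating this conjugation satisfy all the relations of `VL n`. Every step
transports a known relation along a conjugation (`SemiconjBy`):

* `ρⱼ` commutes with `yⱼ₊₂` because `ρⱼ₊₁ ρⱼ₊₂ ρⱼ ρⱼ₊₁` conjugates the commuting pair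
  `(ρⱼ₊₂, yⱼ)` to `(ρⱼ, yⱼ₊₂)` (`RedRel.commute_low`);
* the braid relation for `(yₖ₊₁, yₖ₊₂)` is the one for `(yₖ, yₖ₊₁)` conjugated by
  `ρₖ ρₖ₊₁ ρₖ₊₂` (`RedRel.braid_redY`).

In the code indices are 0-based, and families indexed by `Fin (n - 1)` are extended by `1` to `ℕ`
so that the recursion can be written on natural numbers. -/

open FreeGroup

/-- Generators of the virtual triplet group `VL n`: `Sum.inl i` is `y_{i+1}`,
`Sum.inr i` is `ρ_{i+1}`. -/
abbrev VLGen (n : ℕ) := Fin (n - 1) ⊕ Fin (n - 1)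

def fY {n : ℕ} (i : Fin (n - 1)) : FreeGroup (VLGen n) := FreeGroup.of (Sum.inl i)
def fP {n : ℕ} (i : Fin (n - 1)) : FreeGroup (VLGen n) := FreeGroup.of (Sum.inr i)

/-- Defining relators of the virtual triplet group `VL n` (indices are 0-based: index `i`
corresponds to the generator with subscript `i+1`). -/
def vlRels (n : ℕ) : Set (FreeGroup (VLGen n)) :=
  {r | (∃ i, r = fY i ^ 2) ∨ (∃ i, r = fP i ^ 2) ∨
    (∃ i j : Fin (n - 1), (i : ℕ) + 2 ≤ (j : ℕ) ∧ r = fP i * fP j * (fP i)⁻¹ * (fP j)⁻¹) ∨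
    (∃ i j : Fin (n - 1), ((i : ℕ) + 2 ≤ (j : ℕ) ∨ (j : ℕ) + 2 ≤ (i : ℕ)) ∧
      r = fY i * fP j * (fY i)⁻¹ * (fP j)⁻¹) ∨
    (∃ i j : Fin (n - 1), (j : ℕ) = (i : ℕ) + 1 ∧
      r = fY i * fY j * fY i * (fY j * fY i * fY j)⁻¹) ∨
    (∃ i j : Fin (n - 1), (j : ℕ) = (i : ℕ) + 1 ∧
      r = fP i * fP j * fP i * (fP j * fP i * fP j)⁻¹) ∨
    (∃ i j : Fin (n - 1), (j : ℕ) = (i : ℕ) + 1 ∧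
      r = fP i * fY j * fP i * (fP j * fY i * fP j)⁻¹)}

/-- The virtual triplet group `VL n`. -/
abbrev VL (n : ℕ) := PresentedGroup (vlRels n)

/-- The generator `y_{i+1}` of `VL n`. -/
def yG {n : ℕ} (i : Fin (n - 1)) : VL n := PresentedGroup.of (Sum.inl i)
/-- The generator `ρ_{i+1}` of `VL n`. -/
def pG {n : ℕ} (i : Fin (n - 1)) : VL n := PresentedGroup.of (Sum.inr i)

/-- Relators of the reduced presentation of `VL n` (Theorem 3.1): generator `none` is `y₁`,
`some i` is `ρ_{i+1}`. -/
def vlRedRels (n : ℕ) : Set (FreeGroup (Option (Fin (n - 1)))) :=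
  {r | (r = FreeGroup.of none ^ 2) ∨
    (∃ i : Fin (n - 1), r = FreeGroup.of (some i) ^ 2) ∨
    (∃ i j : Fin (n - 1), (i : ℕ) + 2 ≤ (j : ℕ) ∧
      r = FreeGroup.of (some i) * FreeGroup.of (some j) *
        (FreeGroup.of (some i))⁻¹ * (FreeGroup.of (some j))⁻¹) ∨
    (∃ i j : Fin (n - 1), (j : ℕ) = (i : ℕ) + 1 ∧
      r = FreeGroup.of (some i) * FreeGroup.of (some j) * FreeGroup.of (some i) *
        (FreeGroup.of (some j) * FreeGroup.of (some i) * FreeGroup.of (some j))⁻¹) ∨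
    (∃ i : Fin (n - 1), 2 ≤ (i : ℕ) ∧
      r = FreeGroup.of (some i) * FreeGroup.of none *
        (FreeGroup.of (some i))⁻¹ * (FreeGroup.of none)⁻¹) ∨
    (∃ i1 i2 : Fin (n - 1), (i1 : ℕ) = 0 ∧ (i2 : ℕ) = 1 ∧
      r = (FreeGroup.of none * FreeGroup.of (some i1) * FreeGroup.of (some i2) *
        FreeGroup.of none * FreeGroup.of (some i2) * FreeGroup.of (some i1)) ^ 3)}

/-- The elements `y` and `p i`, `i < m`, satisfy the relations of the reduced presentation.
Nothing is required of `p i` for `i ≥ m`. -/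
structure RedRel {G : Type*} [Group G] (m : ℕ) (y : G) (p : ℕ → G) : Prop where
  hy : y * y = 1
  hp : ∀ i, i < m → p i * p i = 1
  comm : ∀ i j, i + 2 ≤ j → j < m → Commute (p i) (p j)
  braid : ∀ i, i + 1 < m → p i * p (i + 1) * p i = p (i + 1) * p i * p (i + 1)
  hcy : ∀ i, 2 ≤ i → i < m → Commute (p i) y
  cube : 1 < m → (y * p 0 * p 1 * y * p 1 * p 0) ^ 3 = 1

/-- The candidate for `y_{k+1}` (1-based subscript): iterated conjugation of `y` by `p i * p (i + 1)`, `i < k`. -/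
def redY {G : Type*} [Group G] (y : G) (p : ℕ → G) : ℕ → G
  | 0 => y
  | k + 1 => (p k * p (k + 1)) * redY y p k * (p k * p (k + 1))⁻¹

/-! ### Consequences of the reduced relations in an abstract group -/

theorem SemiconjBy.commute_transfer {G : Type*} [Group G] {w a b a' b' : G}
    (ha : SemiconjBy w a a') (hb : SemiconjBy w b b') (h : Commute a b) : Commute a' b' := by
  have h1 := ha.mul_right hb
  have h2 := hb.mul_right ha
  rw [h.eq] at h1
  exact mul_right_cancel (h1.eq.symm.trans h2.eq)

theorem SemiconjBy.braid_transfer {G : Type*} [Group G] {w a b a' b' : G}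
    (ha : SemiconjBy w a a') (hb : SemiconjBy w b b') (h : a * b * a = b * a * b) :
    a' * b' * a' = b' * a' * b' := by
  have h1 := (ha.mul_right hb).mul_right ha
  have h2 := (hb.mul_right ha).mul_right hb
  rw [h] at h1
  exact mul_right_cancel (h1.eq.symm.trans h2.eq)

theorem semiconjBy_redY {G : Type*} [Group G] (y : G) (p : ℕ → G) (k : ℕ) :
    SemiconjBy (p k * p (k + 1)) (redY y p k) (redY y p (k + 1)) :=
  SemiconjBy.conj_mk _ _

theorem braid_of_cube {G : Type*} [Group G] {a b : G} (ha : a * a = 1) (hb : b * b = 1)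
    (h : (a * b) ^ 3 = 1) : a * b * a = b * a * b := by
  have ha' : a⁻¹ = a := inv_eq_of_mul_eq_one_right ha
  have hb' : b⁻¹ = b := inv_eq_of_mul_eq_one_right hb
  have h1 : (a * b * a) * (b * a * b) = 1 := by
    rw [← h]; simp only [pow_succ, pow_zero, one_mul, mul_assoc]
  rw [eq_inv_of_mul_eq_one_left h1]
  simp only [mul_inv_rev, ha', hb', mul_assoc]

/-- For involutions `r`, `s`, the mixed relation `r y' r = s y s` expresses `y'` as the conjugate
of `y` by `r s`. -/
theorem mixed_iff {G : Type*} [Group G] {r s y y' : G} (hr : r * r = 1) (hs : s * s = 1) :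
    r * y' * r = s * y * s ↔ y' = (r * s) * y * (r * s)⁻¹ := by
  have hr' : r⁻¹ = r := inv_eq_of_mul_eq_one_right hr
  have hs' : s⁻¹ = s := inv_eq_of_mul_eq_one_right hs
  have key : (r * s) * y * (r * s)⁻¹ = r * (s * y * s) * r⁻¹ := by
    simp only [mul_inv_rev, hs', mul_assoc]
  rw [key, eq_mul_inv_iff_mul_eq, ← inv_mul_eq_iff_eq_mul (a := r), hr', ← mul_assoc]

namespace RedRel

variable {G : Type*} [Group G] {m : ℕ} {y : G} {p : ℕ → G}

theorem redY_sq (H : RedRel m y p) (k : ℕ) : redY y p k * redY y p k = 1 := by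
  induction k with
  | zero => exact H.hy
  | succ k ih => rw [redY, conj_mul, ih]; simp

/-- `ρⱼ` commutes with `redY y p k` for `j ≥ k + 2`. -/
theorem commute_high (H : RedRel m y p) (k j : ℕ) (h : k + 2 ≤ j) (hj : j < m) :
    Commute (p j) (redY y p k) := by
  induction k with
  | zero => exact H.hcy j h hj
  | succ k ih =>
    have h1 : Commute (p j) (p k * p (k + 1)) :=
      ((H.comm k j (by omega) hj).symm).mul_right ((H.comm (k + 1) j (by omega) hj).symm)
    exact (h1.mul_right (ih (by omega))).mul_right h1.inv_right

/-- `ρⱼ` commutes with `redY y p k` for `j ≤ k - 2`; the case `j = k - 2` is the essential one, the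
others follow from it by induction on `k`. -/
theorem commute_low (H : RedRel m y p) (k j : ℕ) (h : j + 2 ≤ k) (hk : k < m) :
    Commute (p j) (redY y p k) := by
  induction k, h using Nat.le_induction with
  | base =>
    -- `ρⱼ₊₁ ρⱼ₊₂ ρⱼ ρⱼ₊₁` takes `yⱼ` to `yⱼ₊₂`, and, as `ρⱼ₊₁ ρⱼ ρⱼ₊₂ ρⱼ₊₁`, takes `ρⱼ₊₂` to `ρⱼ`.
    have hY := (semiconjBy_redY y p (j + 1)).mul_left (semiconjBy_redY y p j)
    have h1 : SemiconjBy (p (j + 1) * p j) (p (j + 1)) (p j) := by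
      have := H.braid j (by omega)
      rw [SemiconjBy, ← this, mul_assoc]
    have h2 : SemiconjBy (p (j + 2) * p (j + 1)) (p (j + 2)) (p (j + 1)) := by
      have := H.braid (j + 1) (by omega)
      rw [SemiconjBy, ← this, mul_assoc]
    have hP := h1.mul_left h2
    have hw : p (j + 1) * p j * (p (j + 2) * p (j + 1))
        = p (j + 1) * p (j + 1 + 1) * (p j * p (j + 1)) := by
      have := (H.comm j (j + 2) (by omega) hk).eq
      simp only [mul_assoc]
      rw [← mul_assoc (p j), this]
      simp only [mul_assoc]
    rw [hw] at hP
    exact hP.commute_transfer hY (H.commute_high j (j + 2) (by omega) hk)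
  | succ k h ih =>
    have h1 : Commute (p j) (p k * p (k + 1)) :=
      (H.comm j k (by omega) (by omega)).mul_right (H.comm j (k + 1) (by omega) hk)
    exact (h1.mul_right (ih (by omega))).mul_right h1.inv_right

theorem braid_redY (H : RedRel m y p) (k : ℕ) (hk : k + 1 < m) :
    redY y p k * redY y p (k + 1) * redY y p k
      = redY y p (k + 1) * redY y p k * redY y p (k + 1) := by
  induction k with
  | zero =>
    refine braid_of_cube (H.redY_sq 0) (H.redY_sq 1) ?_
    have h0 : (p 0)⁻¹ = p 0 := inv_eq_of_mul_eq_one_right (H.hp 0 (by omega))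
    have h1 : (p 1)⁻¹ = p 1 := inv_eq_of_mul_eq_one_right (H.hp 1 (by omega))
    rw [← H.cube (by omega)]
    simp only [redY, mul_inv_rev, h0, h1, zero_add, mul_assoc]
  | succ k ih =>
    have hA : SemiconjBy (p k * p (k + 1) * p (k + 2)) (redY y p k) (redY y p (k + 1)) :=
      (semiconjBy_redY y p k).mul_left (H.commute_high k (k + 2) le_rfl hk)
    have hB : SemiconjBy (p k * p (k + 1) * p (k + 2)) (redY y p (k + 1)) (redY y p (k + 2)) := by
      rw [mul_assoc]
      exact SemiconjBy.mul_left (H.commute_low (k + 2) k le_rfl hk)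
        (semiconjBy_redY y p (k + 1))
    exact hA.braid_transfer hB (ih (by omega))

end RedRel

/-! ### The homomorphism from `VL n` to the reduced group -/

/-- Extension by `1` of a family indexed by `Fin m` to a family indexed by `ℕ`. -/
def extOne {G : Type*} [Group G] {m : ℕ} (f : Fin m → G) (i : ℕ) : G :=
  if h : i < m then f ⟨i, h⟩ else 1

theorem extOne_of_lt {G : Type*} [Group G] {m : ℕ} (f : Fin m → G) {i : ℕ} (h : i < m) :
    extOne f i = f ⟨i, h⟩ := dif_pos h

theorem extOne_val {G : Type*} [Group G] {m : ℕ} (f : Fin m → G) (i : Fin m) :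
    extOne f i = f i := extOne_of_lt f i.2

theorem commutator_eq_one {G : Type*} [Group G] {a b : G} :
    a * b * a⁻¹ * b⁻¹ = 1 ↔ a * b = b * a := by
  rw [mul_inv_eq_one, mul_inv_eq_iff_eq_mul]

/-- The generators `ρ` of the reduced group, extended to `ℕ`. -/
def redP (n : ℕ) : ℕ → PresentedGroup (vlRedRels n) :=
  extOne fun i => PresentedGroup.of (some i)

theorem redP_of_lt {n i : ℕ} (h : i < n - 1) :
    redP n i = PresentedGroup.of (some ⟨i, h⟩) := extOne_of_lt _ h

theorem redRel_red (n : ℕ) :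
    RedRel (n - 1) (PresentedGroup.of none : PresentedGroup (vlRedRels n)) (redP n) where
  hy := by
    have := PresentedGroup.one_of_mem (rels := vlRedRels n) (Or.inl rfl)
    exact (pow_two _).symm.trans this
  hp i hi := by
    have := PresentedGroup.one_of_mem (rels := vlRedRels n) (Or.inr <| Or.inl ⟨⟨i, hi⟩, rfl⟩)
    simp only [redP_of_lt, hi]
    exact (pow_two _).symm.trans this
  comm i j h hj := by
    have hi : i < n - 1 := by omega
    have := PresentedGroup.one_of_mem (rels := vlRedRels n)
      (Or.inr <| Or.inr <| Or.inl ⟨⟨i, hi⟩, ⟨j, hj⟩, h, rfl⟩)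
    simp only [redP_of_lt, hi, hj]
    exact commutator_eq_one.1 this
  braid i h := by
    have hi : i < n - 1 := by omega
    have := PresentedGroup.one_of_mem (rels := vlRedRels n)
      (Or.inr <| Or.inr <| Or.inr <| Or.inl ⟨⟨i, hi⟩, ⟨i + 1, h⟩, rfl, rfl⟩)
    simp only [redP_of_lt, hi, h]
    exact mul_inv_eq_one.1 this
  hcy i h hi := by
    have := PresentedGroup.one_of_mem (rels := vlRedRels n)
      (Or.inr <| Or.inr <| Or.inr <| Or.inr <| Or.inl ⟨⟨i, hi⟩, h, rfl⟩)
    simp only [redP_of_lt, hi]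
    exact commutator_eq_one.1 this
  cube h := by
    have h0 : 0 < n - 1 := by omega
    have := PresentedGroup.one_of_mem (rels := vlRedRels n)
      (Or.inr <| Or.inr <| Or.inr <| Or.inr <| Or.inr ⟨⟨0, h0⟩, ⟨1, h⟩, rfl, rfl, rfl⟩)
    simp only [redP_of_lt, h0, h]
    exact this

/-- Images in the reduced group of the generators of `VL n`. -/
def toRedGen (n : ℕ) : VLGen n → PresentedGroup (vlRedRels n) :=
  Sum.elim (fun i => redY (PresentedGroup.of none) (redP n) i) (fun i => redP n i)

theorem toRedGen_rels (n : ℕ) : ∀ r ∈ vlRels n, FreeGroup.lift (toRedGen n) r = 1 := by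
  have H := redRel_red n
  rintro r (⟨i, rfl⟩ | ⟨i, rfl⟩ | ⟨i, j, h, rfl⟩ | ⟨i, j, h, rfl⟩ | ⟨i, j, h, rfl⟩ |
    ⟨i, j, h, rfl⟩ | ⟨i, j, h, rfl⟩) <;>
    simp only [_root_.map_mul, _root_.map_inv, _root_.map_pow, fY, fP, FreeGroup.lift_apply_of,
      toRedGen, Sum.elim_inl, Sum.elim_inr]
  · rw [pow_two, H.redY_sq]
  · rw [pow_two, H.hp i i.2]
  · exact commutator_eq_one.2 (H.comm i j h j.2)
  · refine commutator_eq_one.2 ?_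
    rcases h with h | h
    · exact (H.commute_high i j h j.2).eq.symm
    · exact (H.commute_low i j h i.2).eq.symm
  · rw [mul_inv_eq_one, h, H.braid_redY i (h ▸ j.2)]
  · rw [mul_inv_eq_one, h, H.braid i (h ▸ j.2)]
  · have hj : (i : ℕ) + 1 < n - 1 := h ▸ j.2
    rw [mul_inv_eq_one, h]
    exact (mixed_iff (H.hp i i.2) (H.hp _ hj)).2 rfl

/-! ### The inverse homomorphism -/

section VLRelations

variable {n : ℕ}

theorem yG_sq (i : Fin (n - 1)) : (yG i : VL n) * yG i = 1 := by
  have := PresentedGroup.one_of_mem (rels := vlRels n) (Or.inl ⟨i, rfl⟩)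
  exact (pow_two _).symm.trans this

theorem pG_sq (i : Fin (n - 1)) : (pG i : VL n) * pG i = 1 := by
  have := PresentedGroup.one_of_mem (rels := vlRels n) (Or.inr <| Or.inl ⟨i, rfl⟩)
  exact (pow_two _).symm.trans this

theorem pG_comm (i j : Fin (n - 1)) (h : (i : ℕ) + 2 ≤ j) :
    (pG i : VL n) * pG j = pG j * pG i := by
  have := PresentedGroup.one_of_mem (rels := vlRels n)
    (Or.inr <| Or.inr <| Or.inl ⟨i, j, h, rfl⟩)
  exact commutator_eq_one.1 this

theorem yG_pG_comm (i j : Fin (n - 1)) (h : (i : ℕ) + 2 ≤ j) :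
    (yG i : VL n) * pG j = pG j * yG i := by
  have := PresentedGroup.one_of_mem (rels := vlRels n)
    (Or.inr <| Or.inr <| Or.inr <| Or.inl ⟨i, j, Or.inl h, rfl⟩)
  exact commutator_eq_one.1 this

theorem yG_braid (i j : Fin (n - 1)) (h : (j : ℕ) = i + 1) :
    (yG i : VL n) * yG j * yG i = yG j * yG i * yG j := by
  have := PresentedGroup.one_of_mem (rels := vlRels n)
    (Or.inr <| Or.inr <| Or.inr <| Or.inr <| Or.inl ⟨i, j, h, rfl⟩)
  exact mul_inv_eq_one.1 this

theorem pG_braid (i j : Fin (n - 1)) (h : (j : ℕ) = i + 1) :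
    (pG i : VL n) * pG j * pG i = pG j * pG i * pG j := by
  have := PresentedGroup.one_of_mem (rels := vlRels n)
    (Or.inr <| Or.inr <| Or.inr <| Or.inr <| Or.inr <| Or.inl ⟨i, j, h, rfl⟩)
  exact mul_inv_eq_one.1 this

theorem yG_succ (i j : Fin (n - 1)) (h : (j : ℕ) = i + 1) :
    (yG j : VL n) = (pG i * pG j) * yG i * (pG i * pG j)⁻¹ := by
  have := PresentedGroup.one_of_mem (rels := vlRels n)
    (Or.inr <| Or.inr <| Or.inr <| Or.inr <| Or.inr <| Or.inr ⟨i, j, h, rfl⟩)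
  exact (mixed_iff (pG_sq i) (pG_sq j)).1 (mul_inv_eq_one.1 this)

end VLRelations

/-- Images in `VL n` of the generators of the reduced group. -/
def ofRedGen (n : ℕ) (h0 : 0 < n - 1) : Option (Fin (n - 1)) → VL n
  | none => yG ⟨0, h0⟩
  | some i => pG i

theorem ofRedGen_rels (n : ℕ) (h0 : 0 < n - 1) :
    ∀ r ∈ vlRedRels n, FreeGroup.lift (ofRedGen n h0) r = 1 := by
  rintro r (rfl | ⟨i, rfl⟩ | ⟨i, j, h, rfl⟩ | ⟨i, j, h, rfl⟩ | ⟨i, h, rfl⟩ |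
    ⟨i, j, hi, hj, rfl⟩) <;>
    simp only [_root_.map_mul, _root_.map_inv, _root_.map_pow, FreeGroup.lift_apply_of, ofRedGen]
  · rw [pow_two, yG_sq]
  · rw [pow_two, pG_sq]
  · exact commutator_eq_one.2 (pG_comm i j h)
  · rw [mul_inv_eq_one, pG_braid i j h]
  · exact commutator_eq_one.2 (yG_pG_comm _ i (by simpa using h)).symm
  · rw [show (⟨0, h0⟩ : Fin (n - 1)) = i from Fin.ext hi.symm]
    have hij : (j : ℕ) = i + 1 := by omega
    have hs := yG_succ i j hij
    have hi' := inv_eq_of_mul_eq_one_right (pG_sq i)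
    have hj' := inv_eq_of_mul_eq_one_right (pG_sq j)
    rw [mul_inv_rev, hi', hj'] at hs
    have e : yG i * pG i * pG j * yG i * pG j * pG i = yG i * yG j := by
      rw [hs]; simp only [mul_assoc]
    rw [e]
    calc (yG i * yG j) ^ 3
      _ = (yG i * yG j * yG i) * (yG j * yG i * yG j) := by
        simp only [pow_succ, pow_zero, one_mul, mul_assoc]
      _ = yG j * yG i * (yG j * yG j) * yG i * yG j := by
        rw [yG_braid i j hij]; simp only [mul_assoc]
      _ = 1 := by rw [yG_sq j, mul_one, mul_assoc (yG j), yG_sq i, mul_one, yG_sq j]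

/-- For `n ≥ 3`, `VL n` is isomorphic to the group with generators
`y₁, ρ₁, …, ρ_{n-1}` and relations `y₁² = 1`, `ρᵢ² = 1`, `ρᵢρⱼ = ρⱼρᵢ` for `|i-j| ≥ 2`,
`ρᵢρ_{i+1}ρᵢ = ρ_{i+1}ρᵢρ_{i+1}`, `ρᵢy₁ = y₁ρᵢ` for `i ≥ 3`, and `(y₁ρ₁ρ₂y₁ρ₂ρ₁)³ = 1`,
via `y₁ ↦ y₁` and `ρᵢ ↦ ρᵢ`. -/
theorem stmt8 (n : ℕ) (hn : 3 ≤ n) :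
    ∃ φ : VL n ≃* PresentedGroup (vlRedRels n),
      φ (yG ⟨0, by omega⟩) = PresentedGroup.of none ∧
        ∀ i : Fin (n - 1), φ (pG i) = PresentedGroup.of (some i) := by
  let f : VL n →* PresentedGroup (vlRedRels n) := PresentedGroup.toGroup (toRedGen_rels n)
  let g : PresentedGroup (vlRedRels n) →* VL n := PresentedGroup.toGroup (ofRedGen_rels n (by omega))
  have fy (i : Fin (n - 1)) : f (yG i) = redY (PresentedGroup.of none) (redP n) i :=
    PresentedGroup.toGroup.of _
  have fp (i : Fin (n - 1)) : f (pG i) = PresentedGroup.of (some i) :=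
    (PresentedGroup.toGroup.of _).trans (extOne_val (fun i => PresentedGroup.of (some i)) i)
  have gy : g (PresentedGroup.of none) = yG ⟨0, by omega⟩ := PresentedGroup.toGroup.of _
  have gp (i : Fin (n - 1)) : g (PresentedGroup.of (some i)) = pG i := PresentedGroup.toGroup.of _
  have gY (k : ℕ) (hk : k < n - 1) :
      g (redY (PresentedGroup.of none) (redP n) k) = yG ⟨k, hk⟩ := by
    induction k with
    | zero => exact gy
    | succ k ih =>
      have hk' : k < n - 1 := by omega
      rw [yG_succ ⟨k, hk'⟩ ⟨k + 1, hk⟩ rfl, redY]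
      simp only [_root_.map_mul, _root_.map_inv, ih hk', redP_of_lt, hk, hk', gp]
  refine ⟨MonoidHom.toMulEquiv f g ?_ ?_, fy ⟨0, by omega⟩, fp⟩
  · refine PresentedGroup.ext ?_
    rintro (i | i)
    · exact (congrArg g (fy i)).trans (gY i i.2)
    · exact (congrArg g (fp i)).trans (gp i)
  · refine PresentedGroup.ext ?_
    rintro (_ | i)
    · exact (congrArg f gy).trans (fy _)
    · exact (congrArg f (gp i)).trans (fp i)
end

section
/- For n ≥ 4, the commutator subgroup VL_n' of the virtual triplet group VL_n is generated by the elements α_i = ρ_i ρ_1 (2 ≤ i ≤ n-1), β = y_1 ρ_2 ρ_1 y_1, and δ = (ρ_1 y_1)², and VL_n' has the presentation with generating set {α_2, …, α_{n-1}, β, δ} and defining relations: α_2³ = 1; α_j² = 1 for 3 ≤ j ≤ n-1; β³ = 1; (α_i α_{i+1}^{-1})³ = 1 for 2 ≤ i ≤ n-2; (α_i α_j^{-1})² = 1 for 2 ≤ i ≤ n-2 and j ≥ i+2; (α_j δ)² = 1 for 3 ≤ j ≤ n-1; (β δ^{-1} α_3^{-1})³ = 1; (β δ^{-1} α_j^{-1})²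 = 1 for 4 ≤ j ≤ n-1; (α_2^{-1} β)³ = 1; and (δ β δ^{-1} α_2^{-1})³ = 1. -/
/-!
Write `r = ρ₁`, `y = y₁`, and let `CG n` be the abstract group with the claimed presentation.

*The homomorphism.* The claimed relations are consequences of those of `VL n`
(`VLRel.commRel`), so there is `φ : CG n → VL n` with the prescribed values on generators.

*Injectivity.* `CG n` carries two involutive automorphisms, modelled on conjugation by `r` and `y`:
`σ : α_i ↦ α_i⁻¹, β ↦ δ β⁻¹ δ⁻¹, δ ↦ δ⁻¹` and
`τ : α_2 ↦ β, β ↦ α_2, α_j ↦ α_j δ (j ≥ 3), δ ↦ δ⁻¹`.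
They satisfy `τ σ = σ ∘ conj δ ∘ τ`, and therefore `CG n` embeds in a group `E` containing
involutions `r`, `y` that induce `σ`, `τ` and satisfy `(r y)² = δ` (`exists_extension`: adjoin `r`
by a semidirect product with a group of order two, extend `τ` by `r ↦ r δ`, adjoin `y` likewise).
In `E` the elements `r`, `α_i r`, `y` satisfy the relations of `VL n`. To check this
economically, the relation `ρ_i y_{i+1} ρ_i = ρ_{i+1} y_i ρ_{i+1}` is used to eliminate
`y_2, y_3, …`; what remains is the symmetric group on the `ρ_i` and an involution `y_1` that
commutes with `ρ_3, ρ_4, …` and satisfies one braid relation (`exists_hom_of_reduced`).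
The resulting homomorphism `f : VL n → E` makes `f ∘ φ` the embedding of `CG n`, so `φ` is
injective.

*Image.* The generators map into the commutator subgroup because all `ρ_i` have the same image in
the abelianization. Conversely the image of `φ` is normalised by `r` and `y`, which together
with it generate `VL n`; so it is normal, and the quotient is generated by the commuting
images of `r` and `y`, hence abelian (`commutator_le`).
-/

open FreeGroup

/-- `α_{i+2}` as a letter of the free group on the generating set
`{α₂, …, α_{n-1}, β, δ}` of the commutator subgroup of `VL n`. -/
def fA {n : ℕ} (i : Fin (n - 2)) : FreeGroup (Fin (n - 2) ⊕ Bool) := FreeGroup.of (Sum.inl i)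
/-- The letter `β`. -/
def fB {n : ℕ} : FreeGroup (Fin (n - 2) ⊕ Bool) := FreeGroup.of (Sum.inr false)
/-- The letter `δ`. -/
def fD {n : ℕ} : FreeGroup (Fin (n - 2) ⊕ Bool) := FreeGroup.of (Sum.inr true)

/-- Relators of the presentation of the commutator subgroup `VL n'` (Theorem 3.2(3)):
index `i : Fin (n-2)` corresponds to the generator `α_{i+2}`. -/
def vlCommRels (n : ℕ) : Set (FreeGroup (Fin (n - 2) ⊕ Bool)) :=
  {r | (∃ i : Fin (n - 2), (i : ℕ) = 0 ∧ r = fA i ^ 3) ∨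
    (∃ j : Fin (n - 2), 1 ≤ (j : ℕ) ∧ r = fA j ^ 2) ∨
    (r = fB ^ 3) ∨
    (∃ i j : Fin (n - 2), (j : ℕ) = (i : ℕ) + 1 ∧ r = (fA i * (fA j)⁻¹) ^ 3) ∨
    (∃ i j : Fin (n - 2), (i : ℕ) + 2 ≤ (j : ℕ) ∧ r = (fA i * (fA j)⁻¹) ^ 2) ∨
    (∃ j : Fin (n - 2), 1 ≤ (j : ℕ) ∧ r = (fA j * fD) ^ 2) ∨
    (∃ j : Fin (n - 2), (j : ℕ) = 1 ∧ r = (fB * fD⁻¹ * (fA j)⁻¹) ^ 3) ∨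
    (∃ j : Fin (n - 2), 2 ≤ (j : ℕ) ∧ r = (fB * fD⁻¹ * (fA j)⁻¹) ^ 2) ∨
    (∃ i : Fin (n - 2), (i : ℕ) = 0 ∧ r = ((fA i)⁻¹ * fB) ^ 3) ∨
    (∃ i : Fin (n - 2), (i : ℕ) = 0 ∧ r = (fD * fB * fD⁻¹ * (fA i)⁻¹) ^ 3)}

/-! ### Elementary group-theoretic facts -/

section Aux

universe u

variable {G : Type*} [Group G]

lemma pow_conj {g h x : G} {m : ℕ} (hg : g ^ m = 1) (e : h = x * g * x⁻¹) : h ^ m = 1 := by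
  rw [e, conj_pow, hg]; simp

lemma pow_conj_inv {g h x : G} {m : ℕ} (hg : g ^ m = 1) (e : h = x * g⁻¹ * x⁻¹) :
    h ^ m = 1 := by
  rw [e, conj_pow, inv_pow, hg]; simp

lemma inv_of_invol {x : G} (h : x * x = 1) : x⁻¹ = x := inv_eq_of_mul_eq_one_right h

lemma mul_cancel_invol {x : G} (h : x * x = 1) (z : G) : x * (x * z) = z := by
  rw [← mul_assoc, h, one_mul]

lemma sq_of_comm {p q : G} (hp : p * p = 1) (hq : q * q = 1) (h : p * q = q * p) :
    (p * q) ^ 2 = 1 := by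
  rw [sq]; nth_rewrite 2 [h]
  simp [mul_assoc, mul_cancel_invol hq, hp]

lemma comm_of_sq {p q : G} (hp : p * p = 1) (hq : q * q = 1) (h : (p * q) ^ 2 = 1) :
    p * q = q * p := by
  rw [sq] at h
  rw [← inv_of_invol h, mul_inv_rev, inv_of_invol hp, inv_of_invol hq]

lemma cube_of_braid {p q : G} (hp : p * p = 1) (hq : q * q = 1)
    (h : p * q * p = q * p * q) : (p * q) ^ 3 = 1 := by
  have : (p * q) ^ 3 = (p * q * p) * (q * p * q) := by simp [pow_succ, mul_assoc]
  rw [this, ← h]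
  simp [mul_assoc, mul_cancel_invol hp, mul_cancel_invol hq, hp]

lemma braid_of_cube_s11 {p q : G} (hp : p * p = 1) (hq : q * q = 1) (h : (p * q) ^ 3 = 1) :
    p * q * p = q * p * q := by
  have : (p * q) ^ 3 = (p * q * p) * (q * p * q) := by simp [pow_succ, mul_assoc]
  rw [this] at h
  rw [eq_inv_of_mul_eq_one_left h]
  simp [mul_assoc, inv_of_invol hp, inv_of_invol hq]

/-- The homomorphism from the group `ℤˣ` of order two determined by an element of square one. -/
def unitsHom (x : G) (h : x * x = 1) : ℤˣ →* G where
  toFun u := if u = 1 then 1 else x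
  map_one' := by simp
  map_mul' u v := by
    rcases Int.units_eq_one_or u with rfl | rfl <;> rcases Int.units_eq_one_or v with rfl | rfl <;>
      simp [h]

lemma unitsHom_neg_one (x : G) (h : x * x = 1) : unitsHom x h (-1) = x := by
  simp [unitsHom]

/-- An involutive endomorphism, as an automorphism. -/
def invAut (σ : G →* G) (h : ∀ x, σ (σ x) = x) : MulAut G :=
  MonoidHom.toMulEquiv σ σ (by ext x; simp [h]) (by ext x; simp [h])

lemma invAut_mul_self (σ : G →* G) (h : ∀ x, σ (σ x) = x) : invAut σ h * invAut σ h = 1 := by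
  ext x; simp [invAut, h]

/-- The split extension of `G` by an involution `σ`. -/
abbrev Ext2 (σ : G →* G) (h : ∀ x, σ (σ x) = x) : Type _ :=
  G ⋊[unitsHom (invAut σ h) (invAut_mul_self σ h)] ℤˣ

/-- The involution of `Ext2 σ h` acting on `G` as `σ`. -/
def Ext2.t (σ : G →* G) (h : ∀ x, σ (σ x) = x) : Ext2 σ h := SemidirectProduct.inr (-1)

lemma Ext2.t_mul_t (σ : G →* G) (h : ∀ x, σ (σ x) = x) : Ext2.t σ h * Ext2.t σ h = 1 := by
  unfold Ext2.t; rw [← _root_.map_mul]; simp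

lemma Ext2.conj (σ : G →* G) (h : ∀ x, σ (σ x) = x) (x : G) :
    Ext2.t σ h * SemidirectProduct.inl x * Ext2.t σ h = SemidirectProduct.inl (σ x) := by
  have := SemidirectProduct.inl_aut (φ := unitsHom (invAut σ h) (invAut_mul_self σ h)) (-1) x
  rw [unitsHom_neg_one] at this
  have h2 : (invAut σ h) x = σ x := rfl
  rw [h2] at this
  rw [this]; rfl

/-- If two involutions `σ`, `τ` of `G` invert `d` and satisfy `τ σ = σ ∘ conj d ∘ τ`, then `G`
embeds into a group in which `σ` and `τ` are conjugation by involutions `r`, `y` with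
`(r y)² = d`: adjoin first `r`, then `y`. -/
lemma exists_extension {G : Type u} [Group G] (σ τ : G →* G) (d : G)
    (hσ : ∀ x, σ (σ x) = x) (hτ : ∀ x, τ (τ x) = x)
    (hσd : σ d = d⁻¹) (hτd : τ d = d⁻¹) (hc : ∀ x, τ (σ x) = σ (d * τ x * d⁻¹)) :
    ∃ (E : Type u) (_ : Group E) (j : G →* E) (r y : E), Function.Injective j ∧ r * r = 1 ∧
      y * y = 1 ∧ (∀ x, r * j x * r = j (σ x)) ∧ (∀ x, y * j x * y = j (τ x)) ∧
      y * r * y = r * j d := by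
  let H := Ext2 σ hσ
  let i : G →* H := SemidirectProduct.inl
  let r : H := Ext2.t σ hσ
  have hr : r * r = 1 := Ext2.t_mul_t σ hσ
  have hri (x : G) : r * i x * r = i (σ x) := Ext2.conj σ hσ x
  have hrd : r * i d * (r * i d) = 1 := by
    rw [← mul_assoc, hri, hσd, ← _root_.map_mul]; simp
  -- `T` extends `τ` to `H` by `r ↦ r d`
  let T : H →* H := SemidirectProduct.lift (i.comp τ) (unitsHom (r * i d) hrd) (by
    intro u
    rcases Int.units_eq_one_or u with rfl | rfl
    · ext1 x
      simp only [_root_.map_one, MonoidHom.comp_apply, MulEquiv.coe_toMonoidHom, MulAut.one_apply]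
    · ext1 x
      simp only [unitsHom_neg_one, MonoidHom.comp_apply, MulEquiv.coe_toMonoidHom,
        MulAut.conj_apply]
      have h2 : (invAut σ hσ) x = σ x := rfl
      rw [h2, hc, ← hri, mul_inv_rev, inv_of_invol hr]
      simp [mul_assoc])
  have hTi (x : G) : T (i x) = i (τ x) := SemidirectProduct.lift_inl _ _ _ _
  have hTr : T r = r * i d := by
    have : T r = unitsHom (r * i d) hrd (-1) := SemidirectProduct.lift_inr _ _ _ _
    rw [this, unitsHom_neg_one]
  have hTT (x : H) : T (T x) = x := by
    have : T.comp T = MonoidHom.id H := by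
      apply SemidirectProduct.hom_ext
      · ext1 x
        change T (T (i x)) = i x
        rw [hTi, hTi, hτ]
      · ext1 u
        rcases Int.units_eq_one_or u with rfl | rfl
        · simp
        · change T (T r) = r
          rw [hTr, _root_.map_mul, hTr, hTi, hτd, mul_assoc, ← _root_.map_mul]; simp
    exact DFunLike.congr_fun this x
  refine ⟨Ext2 T hTT, inferInstance, SemidirectProduct.inl.comp i, SemidirectProduct.inl r,
    Ext2.t T hTT, ?_, ?_, Ext2.t_mul_t T hTT, ?_, ?_, ?_⟩
  · exact SemidirectProduct.inl_injective.comp SemidirectProduct.inl_injective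
  · rw [← _root_.map_mul, hr, _root_.map_one]
  · intro x; simp only [MonoidHom.comp_apply, ← _root_.map_mul, hri]
  · intro x; simp only [MonoidHom.comp_apply, Ext2.conj, hTi]
  · rw [Ext2.conj, hTr, _root_.map_mul]; rfl

end Aux

/-! ### The two presentations as systems of equations -/

/-- The defining relations of `VL n`, for elements `Y i`, `P i` of a group in place of
`y_{i+1}`, `ρ_{i+1}`. -/
structure VLRel {G : Type*} [Group G] (n : ℕ) (Y P : Fin (n - 1) → G) : Prop where
  yy : ∀ i, Y i * Y i = 1
  pp : ∀ i, P i * P i = 1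
  pc : ∀ i j : Fin (n - 1), (i : ℕ) + 2 ≤ j → P i * P j = P j * P i
  yc : ∀ i j : Fin (n - 1), ((i : ℕ) + 2 ≤ j ∨ (j : ℕ) + 2 ≤ i) → Y i * P j = P j * Y i
  yb : ∀ i j : Fin (n - 1), (j : ℕ) = i + 1 → Y i * Y j * Y i = Y j * Y i * Y j
  pb : ∀ i j : Fin (n - 1), (j : ℕ) = i + 1 → P i * P j * P i = P j * P i * P j
  mb : ∀ i j : Fin (n - 1), (j : ℕ) = i + 1 → P i * Y j * P i = P j * Y i * P j

lemma VLRel.exists_hom {G : Type*} [Group G] {n : ℕ} {Y P : Fin (n - 1) → G}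
    (h : VLRel n Y P) :
    ∃ f : VL n →* G, (∀ i, f (yG i) = Y i) ∧ ∀ i, f (pG i) = P i := by
  have key : ∀ r ∈ vlRels n, FreeGroup.lift (Sum.elim Y P) r = 1 := by
    rintro r (⟨i, rfl⟩ | ⟨i, rfl⟩ | ⟨i, j, hij, rfl⟩ | ⟨i, j, hij, rfl⟩ | ⟨i, j, hij, rfl⟩ |
      ⟨i, j, hij, rfl⟩ | ⟨i, j, hij, rfl⟩) <;>
      simp only [fY, fP, _root_.map_mul, _root_.map_inv, _root_.map_pow,
        FreeGroup.lift_apply_of, Sum.elim_inl,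
        Sum.elim_inr]
    · rw [sq, h.yy]
    · rw [sq, h.pp]
    · rw [h.pc i j hij]; group
    · rw [h.yc i j hij]; group
    · rw [h.yb i j hij]; group
    · rw [h.pb i j hij]; group
    · rw [h.mb i j hij]; group
  exact ⟨PresentedGroup.toGroup key, fun i => PresentedGroup.toGroup.of key,
    fun i => PresentedGroup.toGroup.of key⟩

lemma VL_rel (n : ℕ) : VLRel n (yG (n := n)) pG := by
  have e1 (i : Fin (n - 1)) : yG i = PresentedGroup.mk (vlRels n) (fY i) := rfl
  have e2 (i : Fin (n - 1)) : pG i = PresentedGroup.mk (vlRels n) (fP i) := rfl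
  constructor
  · intro i
    rw [e1, ← _root_.map_mul, ← sq]
    exact PresentedGroup.one_of_mem (Or.inl ⟨i, rfl⟩)
  · intro i
    rw [e2, ← _root_.map_mul, ← sq]
    exact PresentedGroup.one_of_mem (Or.inr (Or.inl ⟨i, rfl⟩))
  · intro i j hij
    rw [← mul_inv_eq_one, mul_inv_rev, ← mul_assoc, e2, e2]
    simp only [← _root_.map_mul, ← _root_.map_inv]
    refine (PresentedGroup.one_of_mem (Or.inr (Or.inr (Or.inl ⟨i, j, hij, ?_⟩))))
    simp [mul_assoc]
  · intro i j hij
    rw [← mul_inv_eq_one, mul_inv_rev, ← mul_assoc, e1, e2]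
    simp only [← _root_.map_mul, ← _root_.map_inv]
    exact (PresentedGroup.one_of_mem (Or.inr (Or.inr (Or.inr (Or.inl ⟨i, j, hij, rfl⟩)))))
  · intro i j hij
    rw [← mul_inv_eq_one, e1, e1]
    simp only [← _root_.map_mul, ← _root_.map_inv]
    exact (PresentedGroup.one_of_mem
      (Or.inr (Or.inr (Or.inr (Or.inr (Or.inl ⟨i, j, hij, rfl⟩))))))
  · intro i j hij
    rw [← mul_inv_eq_one, e2, e2]
    simp only [← _root_.map_mul, ← _root_.map_inv]
    exact (PresentedGroup.one_of_mem
      (Or.inr (Or.inr (Or.inr (Or.inr (Or.inr (Or.inl ⟨i, j, hij, rfl⟩)))))))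
  · intro i j hij
    rw [← mul_inv_eq_one, e1, e2, e1, e2]
    simp only [← _root_.map_mul, ← _root_.map_inv]
    exact (PresentedGroup.one_of_mem
      (Or.inr (Or.inr (Or.inr (Or.inr (Or.inr (Or.inr ⟨i, j, hij, rfl⟩)))))))

/-- The relations claimed for the commutator subgroup, for elements `A i`, `B`, `D` of a group
in place of `α_{i+2}`, `β`, `δ`. -/
structure CommRel {G : Type*} [Group G] (n : ℕ) (A : Fin (n - 2) → G) (B D : G) : Prop where
  r1 : ∀ i : Fin (n - 2), (i : ℕ) = 0 → A i ^ 3 = 1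
  r2 : ∀ j : Fin (n - 2), 1 ≤ (j : ℕ) → A j ^ 2 = 1
  r3 : B ^ 3 = 1
  r4 : ∀ i j : Fin (n - 2), (j : ℕ) = i + 1 → (A i * (A j)⁻¹) ^ 3 = 1
  r5 : ∀ i j : Fin (n - 2), (i : ℕ) + 2 ≤ j → (A i * (A j)⁻¹) ^ 2 = 1
  r6 : ∀ j : Fin (n - 2), 1 ≤ (j : ℕ) → (A j * D) ^ 2 = 1
  r7 : ∀ j : Fin (n - 2), (j : ℕ) = 1 → (B * D⁻¹ * (A j)⁻¹) ^ 3 = 1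
  r8 : ∀ j : Fin (n - 2), 2 ≤ (j : ℕ) → (B * D⁻¹ * (A j)⁻¹) ^ 2 = 1
  r9 : ∀ i : Fin (n - 2), (i : ℕ) = 0 → ((A i)⁻¹ * B) ^ 3 = 1
  r10 : ∀ i : Fin (n - 2), (i : ℕ) = 0 → (D * B * D⁻¹ * (A i)⁻¹) ^ 3 = 1

/-- The abstract group with the presentation claimed for the commutator subgroup. -/
abbrev CG (n : ℕ) := PresentedGroup (vlCommRels n)

/-- The generator `α_{i+2}` of `CG n`. -/
def cA {n : ℕ} (i : Fin (n - 2)) : CG n := PresentedGroup.of (Sum.inl i)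
/-- The generator `β` of `CG n`. -/
def cB {n : ℕ} : CG n := PresentedGroup.of (Sum.inr false)
/-- The generator `δ` of `CG n`. -/
def cD {n : ℕ} : CG n := PresentedGroup.of (Sum.inr true)

lemma CommRel.exists_hom {G : Type*} [Group G] {n : ℕ} {A : Fin (n - 2) → G} {B D : G}
    (h : CommRel n A B D) :
    ∃ f : CG n →* G, (∀ i, f (cA i) = A i) ∧ f cB = B ∧ f cD = D := by
  have key : ∀ r ∈ vlCommRels n,
      FreeGroup.lift (Sum.elim A (fun b => if b then D else B)) r = 1 := by
    rintro r (⟨i, hi, rfl⟩ | ⟨i, hi, rfl⟩ | rfl | ⟨i, j, hij, rfl⟩ | ⟨i, j, hij, rfl⟩ |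
      ⟨i, hi, rfl⟩ | ⟨i, hi, rfl⟩ | ⟨i, hi, rfl⟩ | ⟨i, hi, rfl⟩ | ⟨i, hi, rfl⟩) <;>
      simp only [fA, fB, fD, _root_.map_mul, _root_.map_inv, _root_.map_pow,
        FreeGroup.lift_apply_of, Sum.elim_inl,
        Sum.elim_inr, if_true, Bool.false_eq_true, if_false]
    · exact h.r1 i hi
    · exact h.r2 i hi
    · exact h.r3
    · exact h.r4 i j hij
    · exact h.r5 i j hij
    · exact h.r6 i hi
    · exact h.r7 i hi
    · exact h.r8 i hi
    · exact h.r9 i hi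
    · exact h.r10 i hi
  refine ⟨PresentedGroup.toGroup key, fun i => PresentedGroup.toGroup.of key, ?_, ?_⟩
  · exact (PresentedGroup.toGroup.of key).trans (by simp)
  · exact (PresentedGroup.toGroup.of key).trans (by simp)

lemma CG_rel (n : ℕ) : CommRel n (cA (n := n)) cB cD := by
  have e1 (i : Fin (n - 2)) : cA i = PresentedGroup.mk (vlCommRels n) (fA i) := rfl
  have e2 : cB = PresentedGroup.mk (vlCommRels n) fB := rfl
  have e3 : cD = PresentedGroup.mk (vlCommRels n) fD := rfl
  constructor <;> intros <;> simp only [e1, e2, e3, ← _root_.map_mul, ← _root_.map_inv,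
    ← _root_.map_pow] <;>
    apply PresentedGroup.one_of_mem
  · exact Or.inl ⟨_, by assumption, rfl⟩
  · exact Or.inr (Or.inl ⟨_, by assumption, rfl⟩)
  · exact Or.inr (Or.inr (Or.inl rfl))
  · exact Or.inr (Or.inr (Or.inr (Or.inl ⟨_, _, by assumption, rfl⟩)))
  · exact Or.inr (Or.inr (Or.inr (Or.inr (Or.inl ⟨_, _, by assumption, rfl⟩))))
  · exact Or.inr (Or.inr (Or.inr (Or.inr (Or.inr (Or.inl ⟨_, by assumption, rfl⟩)))))
  · exact Or.inr (Or.inr (Or.inr (Or.inr (Or.inr (Or.inr (Or.inl ⟨_, by assumption, rfl⟩))))))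
  · exact Or.inr (Or.inr (Or.inr (Or.inr (Or.inr (Or.inr (Or.inr
      (Or.inl ⟨_, by assumption, rfl⟩)))))))
  · exact Or.inr (Or.inr (Or.inr (Or.inr (Or.inr (Or.inr (Or.inr (Or.inr
      (Or.inl ⟨_, by assumption, rfl⟩))))))))
  · exact Or.inr (Or.inr (Or.inr (Or.inr (Or.inr (Or.inr (Or.inr (Or.inr
      (Or.inr ⟨_, by assumption, rfl⟩))))))))

lemma CG_hom_ext {G : Type*} [Group G] {n : ℕ} {f g : CG n →* G} (hA : ∀ i, f (cA i) = g (cA i))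
    (hB : f cB = g cB) (hD : f cD = g cD) : f = g := by
  apply PresentedGroup.ext
  rintro (i | _ | _)
  · exact hA i
  · exact hB
  · exact hD

/-! ### The relations of the commutator subgroup hold in the virtual triplet group -/

lemma VLRel.commRel {G : Type*} [Group G] {n : ℕ} {Y P : Fin (n - 1) → G} (hn : 3 < n)
    (h : VLRel n Y P) :
    CommRel n (fun i : Fin (n - 2) => P ⟨(i : ℕ) + 1, by omega⟩ * P ⟨0, by omega⟩)
      (Y ⟨0, by omega⟩ * P ⟨1, by omega⟩ * P ⟨0, by omega⟩ * Y ⟨0, by omega⟩)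
      ((P ⟨0, by omega⟩ * Y ⟨0, by omega⟩) ^ 2) := by
  obtain ⟨y, hy⟩ : ∃ y, y = Y ⟨0, by omega⟩ := ⟨_, rfl⟩
  obtain ⟨r, hr⟩ : ∃ r, r = P ⟨0, by omega⟩ := ⟨_, rfl⟩
  obtain ⟨s, hs⟩ : ∃ s, s = P ⟨1, by omega⟩ := ⟨_, rfl⟩
  obtain ⟨q, hq⟩ : ∃ q : Fin (n - 2) → G,
      q = fun i : Fin (n - 2) => P ⟨(i : ℕ) + 1, by omega⟩ := ⟨_, rfl⟩
  have yy : y * y = 1 := hy ▸ h.yy _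
  have rr : r * r = 1 := hr ▸ h.pp _
  have ss : s * s = 1 := hs ▸ h.pp _
  have qq i : q i * q i = 1 := by rw [hq]; exact h.pp _
  have q0 (i : Fin (n - 2)) (hi : (i : ℕ) = 0) : q i = s := by
    rw [hq, hs]; simp [hi]
  have hqi (i : Fin (n - 2)) : P ⟨(i : ℕ) + 1, by omega⟩ = q i := by rw [hq]
  have iy := inv_of_invol yy
  have ir := inv_of_invol rr
  have is := inv_of_invol ss
  have iq i := inv_of_invol (qq i)
  have cy := mul_cancel_invol yy
  have cr := mul_cancel_invol rr
  have cs := mul_cancel_invol ss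
  have sr : (s * r) ^ 3 = 1 := by
    refine cube_of_braid ss rr ?_
    rw [hs, hr]; exact (h.pb _ _ rfl).symm
  have qr (i : Fin (n - 2)) (hi : 1 ≤ (i : ℕ)) : (q i * r) ^ 2 = 1 := by
    refine sq_of_comm (qq i) rr ?_
    rw [hq, hr]; exact (h.pc _ _ (by simp; omega)).symm
  have qy (i : Fin (n - 2)) (hi : 1 ≤ (i : ℕ)) : q i * y = y * q i := by
    rw [hq, hy]; exact (h.yc _ _ (by simp; omega)).symm
  have q3 (i j : Fin (n - 2)) (hij : (j : ℕ) = i + 1) : (q i * q j) ^ 3 = 1 := by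
    refine cube_of_braid (qq i) (qq j) ?_
    rw [hq]; exact (h.pb _ _ (by simp; omega))
  have q2 (i j : Fin (n - 2)) (hij : (i : ℕ) + 2 ≤ j) : (q i * q j) ^ 2 = 1 := by
    refine sq_of_comm (qq i) (qq j) ?_
    rw [hq]; exact (h.pc _ _ (by simp; omega))
  -- `z` is `y_2`
  obtain ⟨z, hz⟩ : ∃ z, z = r * s * y * s * r := ⟨_, rfl⟩
  have zY : z = Y ⟨1, by omega⟩ := by
    have := h.mb ⟨0, by omega⟩ ⟨1, by omega⟩ rfl
    rw [← hr, ← hs, ← hy] at this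
    rw [hz, mul_assoc r s, mul_assoc r, ← this]
    simp [mul_assoc, cr, rr]
  have zz : z * z = 1 := zY ▸ h.yy _
  have yz : (y * z) ^ 3 = 1 := by
    refine cube_of_braid yy zz ?_
    rw [zY, hy]; exact h.yb _ _ rfl
  have i0 : (0 : ℕ) < n - 2 := by omega
  -- `β δ⁻¹ α_j⁻¹ = y₁ (ρ_2 ρ_j) y₁⁻¹` for `j ≥ 3`, since `ρ_j` commutes with `y₁`
  have sq2 (j : Fin (n - 2)) (hj : 1 ≤ (j : ℕ)) :
      y * s * r * y * (((r * y) ^ 2)⁻¹) * (q j * r)⁻¹ = y * (s * q j) * y⁻¹ := by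
    simp only [sq, mul_inv_rev, iy, ir, iq, mul_assoc, cr, cy]
    rw [← qy j hj]
  simp only [← hy, ← hr, ← hs, hqi]
  constructor
  · intro i hi; rw [q0 i hi, sr]
  · exact qr
  · exact pow_conj (x := y) sr (by rw [iy]; simp [mul_assoc])
  · intro i j hij
    simpa [iq] using q3 i j hij
  · intro i j hij
    simpa [iq] using q2 i j hij
  · intro j hj
    refine pow_conj (x := y) (qr j hj) ?_
    simp only [sq, mul_assoc, cr, iy]
    rw [← mul_assoc, qy j hj, mul_assoc]
  · intro j hj
    refine pow_conj (x := y) ?_ (sq2 j (by omega))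
    simpa [q0] using q3 ⟨0, i0⟩ j (by simp [hj])
  · intro j hj
    refine pow_conj (x := y) ?_ (sq2 j (by omega))
    simpa [q0] using q2 ⟨0, i0⟩ j (by simp [hj])
  · intro i hi
    rw [q0 i hi]
    refine pow_conj (x := y⁻¹) yz ?_
    rw [hz]; simp [mul_assoc, ir, is]
  · intro i hi
    rw [q0 i hi]
    refine pow_conj (x := r) yz ?_
    rw [hz]; simp [sq, mul_assoc, ir, is, iy, cr, cy, rr]

/-! ### A smaller presentation of the virtual triplet group -/

/-- `recY P y i` is the element `y_{i+1}`, recovered from `y_1` and the `ρ_i` by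
`y_{i+2} = ρ_{i+1} ρ_{i+2} y_{i+1} ρ_{i+2} ρ_{i+1}`. -/
def recY {G : Type*} [Group G] (P : ℕ → G) (y : G) : ℕ → G
  | 0 => y
  | i + 1 => P i * P (i + 1) * recY P y i * P (i + 1) * P i

/-- `VL n` is presented by the symmetric group on the `ρ_i` together with an involution `y_1`
commuting with `ρ_3, ρ_4, …` and satisfying the braid relation with
`ρ_1 ρ_2 y_1 ρ_2 ρ_1`; the other relations follow by conjugating with the `ρ_i`. -/
lemma exists_hom_of_reduced {G : Type*} [Group G] {n : ℕ} (P : ℕ → G) (y : G)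
    (pp : ∀ i, i < n - 1 → P i * P i = 1)
    (pc : ∀ i j, i + 2 ≤ j → j < n - 1 → P i * P j = P j * P i)
    (pb : ∀ i, i + 1 < n - 1 → P i * P (i + 1) * P i = P (i + 1) * P i * P (i + 1))
    (yy : y * y = 1) (yc : ∀ j, 2 ≤ j → j < n - 1 → y * P j = P j * y)
    (yb : (y * recY P y 1) ^ 3 = 1) :
    ∃ f : VL n →* G, (∀ i : Fin (n - 1), f (yG i) = recY P y i) ∧
      ∀ i : Fin (n - 1), f (pG i) = P i := by
  have hyy : ∀ i, i < n - 1 → recY P y i * recY P y i = 1 := by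
    intro i
    induction i with
    | zero => exact fun _ => yy
    | succ i ih =>
      intro hi
      simp only [recY, mul_assoc]
      simp only [mul_cancel_invol (pp i (by omega)), mul_cancel_invol (pp (i + 1) hi),
        mul_cancel_invol (ih (by omega)), pp i (by omega)]
  have hyc1 : ∀ i j, i + 2 ≤ j → j < n - 1 → Commute (recY P y i) (P j) := by
    intro i
    induction i with
    | zero => exact fun j hj hj' => yc j hj hj'
    | succ i ih =>
      intro j hj hj'
      have c1 : Commute (P i) (P j) := pc i j (by omega) hj'
      have c2 : Commute (P (i + 1)) (P j) := pc _ j (by omega) hj'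
      exact (((c1.mul_left c2).mul_left (ih j (by omega) hj')).mul_left c2).mul_left c1
  have hyc2 : ∀ i j, j + 2 ≤ i → i < n - 1 → Commute (recY P y i) (P j) := by
    intro i
    induction i with
    | zero => intro j hj; omega
    | succ i ih =>
      intro j hj hi
      rcases Nat.lt_or_ge (j + 1) i with h | h
      · have c1 : Commute (P i) (P j) := (pc j i (by omega) (by omega)).symm
        have c2 : Commute (P (i + 1)) (P j) := (pc j _ (by omega) hi).symm
        exact (((c1.mul_left c2).mul_left (ih j (by omega) (by omega))).mul_left c2).mul_left c1
      · obtain rfl : i = j + 1 := by omega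
        -- `y_{j+3}` is the conjugate of `y_{j+1}` by `w = ρ_{j+2} ρ_{j+3} ρ_{j+1} ρ_{j+2}`,
        -- and `w` carries `ρ_{j+3}` to `ρ_{j+1}`.
        have p0 := pp j (by omega)
        have p1 := pp (j + 1) (by omega)
        have p2 := pp (j + 1 + 1) hi
        have c02 := pc j (j + 1 + 1) (by omega) hi
        have b01 := pb j (by omega)
        have b12 := pb (j + 1) hi
        have cc := hyc1 j (j + 1 + 1) (by omega) hi
        simp only [recY]
        generalize recY P y j = u at *
        generalize P j = a at *
        generalize P (j + 1) = b at *
        generalize P (j + 1 + 1) = c at *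
        have e : a * (b * c * a * b) = (b * c * a * b) * c := by
          calc a * (b * c * a * b) = a * b * (c * a) * b := by simp only [mul_assoc]
            _ = (a * b * a) * c * b := by rw [← c02]; simp only [mul_assoc]
            _ = b * a * (b * c * b) := by rw [b01]; simp only [mul_assoc]
            _ = b * (a * c) * b * c := by rw [b12]; simp only [mul_assoc]
            _ = _ := by rw [c02]; simp only [mul_assoc]
        have cw : (b * c) * (a * b * u * b * a) * c * b
            = (b * c * a * b) * u * (b * c * a * b)⁻¹ := by
          simp only [mul_inv_rev, inv_of_invol p0, inv_of_invol p1, inv_of_invol p2, mul_assoc]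
        rw [cw]
        generalize b * c * a * b = w at *
        have ha : a = w * c * w⁻¹ := by rw [← e]; group
        rw [ha]
        exact (Commute.conj_iff w).2 cc
  have hyb : ∀ i, i + 1 < n - 1 → (recY P y i * recY P y (i + 1)) ^ 3 = 1 := by
    intro i
    induction i with
    | zero => exact fun _ => yb
    | succ i ih =>
      intro hi
      -- conjugation by `ρ_{i+1} ρ_{i+2} ρ_{i+3}` raises all indices by one
      refine pow_conj (x := P i * P (i + 1) * P (i + 1 + 1)) (ih (by omega)) ?_
      have p0 := pp i (by omega)
      have p1 := pp (i + 1) (by omega)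
      have p2 := pp (i + 1 + 1) hi
      have c02 := pc i (i + 1 + 1) (by omega) hi
      have b01 := pb i (by omega)
      have b12 := pb (i + 1) hi
      have cc := hyc1 i (i + 1 + 1) (by omega) hi
      simp only [recY]
      generalize recY P y i = u at *
      generalize P i = a at *
      generalize P (i + 1) = b at *
      generalize P (i + 1 + 1) = c at *
      obtain ⟨w, hw⟩ : ∃ w, w = a * b * c := ⟨_, rfl⟩
      have e1 : w * u * w⁻¹ = a * b * u * b * a := by
        have : c * u = u * c := cc.symm
        rw [hw, mul_assoc (a * b), this]
        simp only [mul_inv_rev, inv_of_invol p0, inv_of_invol p1, inv_of_invol p2, mul_assoc,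
          mul_cancel_invol p2]
      have e2 : w * a * w⁻¹ = b := by
        rw [mul_inv_eq_iff_eq_mul, hw]
        calc a * b * c * a = a * b * (a * c) := by rw [c02]; simp only [mul_assoc]
          _ = (a * b * a) * c := by simp only [mul_assoc]
          _ = _ := by rw [b01]; simp only [mul_assoc]
      have e3 : w * b * w⁻¹ = c := by
        rw [mul_inv_eq_iff_eq_mul, hw]
        calc a * b * c * b = a * (b * c * b) := by simp only [mul_assoc]
          _ = (a * c) * b * c := by rw [b12]; simp only [mul_assoc]
          _ = _ := by rw [c02]; simp only [mul_assoc]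
      rw [← hw]
      have e4 : w * (u * (a * b * u * b * a)) * w⁻¹ = (w * u * w⁻¹) * ((w * a * w⁻¹) *
          (w * b * w⁻¹) * (w * u * w⁻¹) * (w * b * w⁻¹) * (w * a * w⁻¹)) := by group
      rw [e4, e1, e2, e3]
  refine VLRel.exists_hom (Y := fun i => recY P y i) (P := fun i => P i)
    ⟨?_, ?_, ?_, ?_, ?_, ?_, ?_⟩
  · exact fun i => hyy i i.2
  · exact fun i => pp i i.2
  · exact fun i j hij => pc i j hij j.2
  · rintro i j (hij | hij)
    · exact hyc1 i j hij j.2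
    · exact hyc2 i j hij i.2
  · intro i j hij
    have := hyb i (by omega)
    rw [← hij] at this
    exact braid_of_cube_s11 (hyy i i.2) (hyy j j.2) this
  · intro i j hij
    have := pb i (by omega)
    rwa [← hij] at this
  · intro i j hij
    have p0 := pp i i.2
    simp only [hij, recY, mul_assoc, mul_cancel_invol p0, p0, mul_one]

/-! ### The automorphisms induced by conjugation with `ρ₁` and `y₁` -/

/-- The endomorphism `σ` of `CG n` that corresponds to conjugation by `ρ₁`. -/
lemma exists_sigma (n : ℕ) : ∃ σ : CG n →* CG n, (∀ i, σ (cA i) = (cA i)⁻¹) ∧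
    σ cB = cD * cB⁻¹ * cD⁻¹ ∧ σ cD = cD⁻¹ := by
  have h := CG_rel n
  apply CommRel.exists_hom
  constructor
  · intro i hi; rw [inv_pow, h.r1 i hi, inv_one]
  · intro i hi; rw [inv_pow, h.r2 i hi, inv_one]
  · exact pow_conj_inv (x := cD) h.r3 rfl
  · intro i j hij; exact pow_conj_inv (x := (cA i)⁻¹) (h.r4 i j hij) (by group)
  · intro i j hij; exact pow_conj_inv (x := (cA i)⁻¹) (h.r5 i j hij) (by group)
  · intro i hi; exact pow_conj_inv (x := (cA i)⁻¹) (h.r6 i hi) (by group)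
  · intro i hi; exact pow_conj_inv (x := (cA i)⁻¹) (h.r7 i hi) (by group)
  · intro i hi; exact pow_conj_inv (x := (cA i)⁻¹) (h.r8 i hi) (by group)
  · intro i hi; exact pow_conj_inv (x := 1) (h.r10 i hi) (by group)
  · intro i hi; exact pow_conj_inv (x := 1) (h.r9 i hi) (by group)

/-- The endomorphism `τ` of `CG n` that corresponds to conjugation by `y₁`. -/
lemma exists_tau (n : ℕ) (hn : 3 < n) : ∃ τ : CG n →* CG n,
    (∀ i : Fin (n - 2), τ (cA i) = if (i : ℕ) = 0 then cB else cA i * cD) ∧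
    τ cB = cA ⟨0, by omega⟩ ∧ τ cD = cD⁻¹ := by
  have h := CG_rel n
  have i0 : (0 : ℕ) < n - 2 := by omega
  apply CommRel.exists_hom
  constructor
  · intro i hi; rw [if_pos hi]; exact h.r3
  · intro i hi; rw [if_neg (by omega)]; exact h.r6 i hi
  · exact h.r1 _ rfl
  · intro i j hij
    rw [if_neg (show ¬ (j : ℕ) = 0 by omega)]
    split_ifs with hi
    · rw [mul_inv_rev, ← mul_assoc]; exact h.r7 j (by omega)
    · simpa using h.r4 i j hij
  · intro i j hij
    rw [if_neg (show ¬ (j : ℕ) = 0 by omega)]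
    split_ifs with hi
    · rw [mul_inv_rev, ← mul_assoc]; exact h.r8 j (by omega)
    · simpa using h.r5 i j hij
  · intro i hi; rw [if_neg (by omega)]; simpa using h.r2 i hi
  · intro i hi; rw [if_neg (by omega)]
    simpa using h.r4 ⟨0, i0⟩ i (by simpa using hi)
  · intro i hi; rw [if_neg (by omega)]
    simpa using h.r5 ⟨0, i0⟩ i (by simpa using hi)
  · intro i hi; rw [if_pos hi]
    exact pow_conj_inv (x := 1) (h.r9 ⟨0, i0⟩ rfl) (by group)
  · intro i hi; rw [if_pos hi]
    exact pow_conj_inv (x := cD⁻¹) (h.r10 ⟨0, i0⟩ rfl) (by group)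

/-- A group containing `CG n` together with involutions `r`, `y` that induce `σ`, `τ` on it and
satisfy `δ = (r y)²`. -/
lemma exists_CG_extension (n : ℕ) (hn : 3 < n) :
    ∃ (E : Type) (_ : Group E) (j : CG n →* E) (r y : E), Function.Injective j ∧ r * r = 1 ∧
      y * y = 1 ∧ (∀ i, r * j (cA i) * r = (j (cA i))⁻¹) ∧
      (∀ i : Fin (n - 2), y * j (cA i) * y = if (i : ℕ) = 0 then j cB else j (cA i * cD)) ∧
      y * r * y = r * j cD := by
  obtain ⟨σ, σA, σB, σD⟩ := exists_sigma n
  obtain ⟨τ, τA, τB, τD⟩ := exists_tau n hn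
  have hσ : ∀ x, σ (σ x) = x := by
    have : σ.comp σ = MonoidHom.id _ := by
      apply CG_hom_ext
      · intro i; simp [σA]
      · simp [σB, σD, mul_assoc]
      · simp [σD]
    exact DFunLike.congr_fun this
  have hτ : ∀ x, τ (τ x) = x := by
    have : τ.comp τ = MonoidHom.id _ := by
      apply CG_hom_ext
      · intro i
        rw [MonoidHom.comp_apply, τA, MonoidHom.id_apply]
        split_ifs with hi
        · rw [τB]; congr 1; exact Fin.ext hi.symm
        · rw [_root_.map_mul, τA, if_neg hi, τD]; group
      · simp [τB, τA]
      · simp [τD]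
    exact DFunLike.congr_fun this
  have hc : ∀ x, τ (σ x) = σ (cD * τ x * cD⁻¹) := by
    have : τ.comp σ = (σ.comp (MulAut.conj cD).toMonoidHom).comp τ := by
      apply CG_hom_ext
      · intro i
        simp only [MonoidHom.comp_apply, MulEquiv.coe_toMonoidHom, MulAut.conj_apply, σA, τA,
          _root_.map_inv]
        split_ifs with hi
        · simp only [_root_.map_mul, _root_.map_inv, σB, σD]; group
        · simp only [_root_.map_mul, _root_.map_inv, σA, σD]; group
      · simp only [MonoidHom.comp_apply, MulEquiv.coe_toMonoidHom, MulAut.conj_apply, σB, τB,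
          τD, _root_.map_inv, _root_.map_mul, σD, σA]
      · simp [σD, τD]
    exact DFunLike.congr_fun this
  obtain ⟨E, gE, j, r, y, hj, hr, hy, h1, h2, h3⟩ := exists_extension σ τ cD hσ hτ σD τD hc
  refine ⟨E, gE, j, r, y, hj, hr, hy, ?_, ?_, h3⟩
  · intro i; rw [h1, σA, _root_.map_inv]
  · intro i; rw [h2, τA, apply_ite j]

/-- Some homomorphism from `VL n` to a group containing `CG n` sends the elements `ρ_i ρ_1`,
`y_1 ρ_2 ρ_1 y_1`, `(ρ_1 y_1)²` to the generators of `CG n`. -/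
lemma exists_detecting_hom (n : ℕ) (hn : 3 < n) :
    ∃ (E : Type) (_ : Group E) (j : CG n →* E) (f : VL n →* E), Function.Injective j ∧
      (∀ i : Fin (n - 2), j (cA i) = f (pG ⟨(i : ℕ) + 1, by omega⟩ * pG ⟨0, by omega⟩)) ∧
      j cB = f (yG ⟨0, by omega⟩ * pG ⟨1, by omega⟩ * pG ⟨0, by omega⟩ * yG ⟨0, by omega⟩) ∧
      j cD = f ((pG ⟨0, by omega⟩ * yG ⟨0, by omega⟩) ^ 2) := by
  obtain ⟨E, gE, j, r, y, hj, rr, yy, hr, hy, yr⟩ := exists_CG_extension n hn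
  have h := CG_rel n
  have i0 : (0 : ℕ) < n - 2 := by omega
  -- `P k` plays the role of `ρ_{k+1}`; out of range it is set to `1`
  let P : ℕ → E := fun k => if k = 0 then r else
    if hk : k - 1 < n - 2 then j (cA ⟨k - 1, hk⟩) * r else 1
  have P0 : P 0 = r := rfl
  have PS (k : ℕ) (hk : k < n - 2) : P (k + 1) = j (cA ⟨k, hk⟩) * r := by
    simp [P, hk]
  have pp : ∀ i, i < n - 1 → P i * P i = 1 := by
    rintro (_ | i) hi
    · exact rr
    · rw [PS i (by omega), mul_assoc, ← mul_assoc r, hr, mul_inv_cancel]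
  have PP0 (k : ℕ) (hk : k < n - 2) : P (k + 1) * P 0 = j (cA ⟨k, hk⟩) := by
    rw [PS k hk, P0, mul_assoc, rr, mul_one]
  have PP (k l : ℕ) (hk : k < n - 2) (hl : l < n - 2) :
      P (k + 1) * P (l + 1) = j (cA ⟨k, hk⟩ * (cA ⟨l, hl⟩)⁻¹) := by
    rw [PS k hk, PS l hl, mul_assoc, ← mul_assoc r, hr, _root_.map_mul, _root_.map_inv]
  have hy1 : recY P y 1 = (j (cA ⟨0, i0⟩))⁻¹ * y * j (cA ⟨0, i0⟩) := by
    rw [← PP0 0 i0, mul_inv_rev, inv_of_invol (pp 0 (by omega)),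
      inv_of_invol (pp (0 + 1) (by omega))]
    simp only [recY, mul_assoc]
  obtain ⟨f, fy, fp⟩ := exists_hom_of_reduced (n := n) P y pp
    (by
      rintro (_ | i) (_ | j') hij hj'
      · omega
      · refine (comm_of_sq (pp _ hj') (pp 0 (by omega)) ?_).symm
        rw [PP0 j' (by omega), ← _root_.map_pow, h.r2 _ (by simp; omega), _root_.map_one]
      · omega
      · refine comm_of_sq (pp _ (by omega)) (pp _ hj') ?_
        rw [PP i j' (by omega) (by omega), ← _root_.map_pow, h.r5 _ _ (by simp; omega),
          _root_.map_one])
    (by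
      rintro (_ | i) hi
      · refine (braid_of_cube_s11 (pp _ hi) (pp 0 (by omega)) ?_).symm
        rw [PP0 0 (by omega), ← _root_.map_pow, h.r1 _ rfl, _root_.map_one]
      · refine braid_of_cube_s11 (pp _ (by omega)) (pp _ hi) ?_
        rw [PP i (i + 1) (by omega) (by omega), ← _root_.map_pow, h.r4 _ _ rfl, _root_.map_one])
    yy
    (by
      rintro (_ | k) hk hk'
      · omega
      · rw [PS k (by omega)]
        have e := hy ⟨k, by omega⟩
        rw [if_neg (by simp; omega), _root_.map_mul] at e
        have e1 : y * j (cA ⟨k, by omega⟩) = j (cA ⟨k, by omega⟩) * j cD * y := by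
          rw [← e, mul_assoc _ y y, yy, mul_one]
        have e2 : y * r = r * j cD * y := by rw [← yr, mul_assoc _ y y, yy, mul_one]
        have e3 : r * j cD * (r * j cD) = 1 := by
          rw [← yr]; simp only [mul_assoc, mul_cancel_invol yy, mul_cancel_invol rr, yy]
        have e4 : j cD * (r * j cD) = r := by
          rw [mul_assoc] at e3
          rw [← mul_cancel_invol rr (j cD * (r * j cD)), e3, mul_one]
        rw [← mul_assoc, e1, mul_assoc _ y r, e2]
        calc _ = j (cA ⟨k, by omega⟩) * (j cD * (r * j cD)) * y := by simp only [mul_assoc]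
          _ = _ := by rw [e4])
    (by
      have e := hy ⟨0, i0⟩
      rw [if_pos rfl] at e
      have e1 : y * recY P y 1 = j ((cB)⁻¹ * cA ⟨0, i0⟩) := by
        rw [hy1, _root_.map_mul, _root_.map_inv, ← e]
        simp only [mul_inv_rev, inv_of_invol yy, mul_assoc]
      rw [e1, ← _root_.map_pow,
        pow_conj_inv (x := 1) (h.r9 ⟨0, i0⟩ rfl) (by group), _root_.map_one])
  refine ⟨E, gE, j, f, hj, ?_, ?_, ?_⟩
  · intro i
    rw [_root_.map_mul, fp, fp, PP0 i i.2]
  · have e := hy ⟨0, i0⟩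
    rw [if_pos rfl, ← PP0 0 i0] at e
    rw [_root_.map_mul, _root_.map_mul, _root_.map_mul, fp, fp, fy, ← e]
    simp [recY, mul_assoc]
  · rw [_root_.map_pow, _root_.map_mul, fp, fy]
    change _ = (r * y) ^ 2
    rw [sq, mul_assoc, ← mul_assoc y, yr, mul_cancel_invol rr]

/-! ### The image is the commutator subgroup -/

/-- A subgroup of `VL n` that contains all `α_i` and `δ` and is normalised by `ρ₁` and `y₁`
contains the commutator subgroup: it is normal, and the quotient is generated by the images of
`ρ₁` and `y₁`, which commute because `δ = (ρ₁ y₁)²` becomes trivial. -/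
lemma commutator_le (n : ℕ) (hn : 3 < n) (N : Subgroup (VL n))
    (hA : ∀ i : Fin (n - 2), pG ⟨(i : ℕ) + 1, by omega⟩ * pG ⟨0, by omega⟩ ∈ N)
    (hD : (pG ⟨0, by omega⟩ * yG ⟨0, by omega⟩) ^ 2 ∈ N)
    (hr : ∀ x ∈ N, pG ⟨0, by omega⟩ * x * (pG ⟨0, by omega⟩)⁻¹ ∈ N)
    (hy : ∀ x ∈ N, yG ⟨0, by omega⟩ * x * (yG ⟨0, by omega⟩)⁻¹ ∈ N) :
    commutator (VL n) ≤ N := by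
  have h := VL_rel n
  obtain ⟨y, ey⟩ : ∃ y : VL n, y = yG ⟨0, by omega⟩ := ⟨_, rfl⟩
  obtain ⟨r, er⟩ : ∃ r : VL n, r = pG ⟨0, by omega⟩ := ⟨_, rfl⟩
  rw [← ey] at hy hD
  rw [← er] at hr hD
  have rr : r * r = 1 := er ▸ h.pp _
  have yy : y * y = 1 := ey ▸ h.yy _
  -- a subgroup containing `N`, `ρ₁`, `y₁` is everything
  have gen (M : Subgroup (VL n)) (hN : N ≤ M) (h1 : r ∈ M) (h2 : y ∈ M) : M = ⊤ := by
    have hp : ∀ i, pG i ∈ M := by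
      rintro ⟨_ | i, hi⟩
      · rwa [← er]
      · have := M.mul_mem (hN (hA ⟨i, by omega⟩)) h1
        rwa [← er, mul_assoc, rr, mul_one] at this
    have hyM : ∀ k (hk : k < n - 1), yG ⟨k, hk⟩ ∈ M := by
      intro k
      induction k with
      | zero => intro hk; rwa [← ey]
      | succ k ih =>
        intro hk
        have e := h.mb ⟨k, by omega⟩ ⟨k + 1, hk⟩ rfl
        have e2 : yG ⟨k + 1, hk⟩ = (pG ⟨k, by omega⟩)⁻¹ * (pG ⟨k + 1, hk⟩ * yG ⟨k, by omega⟩ *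
            pG ⟨k + 1, hk⟩) * (pG ⟨k, by omega⟩)⁻¹ := by
          rw [← e]; group
        rw [e2]
        exact M.mul_mem (M.mul_mem (M.inv_mem (hp _)) (M.mul_mem (M.mul_mem (hp _)
          (ih (by omega))) (hp _))) (M.inv_mem (hp _))
    rw [eq_top_iff, ← PresentedGroup.closure_range_of, Subgroup.closure_le]
    rintro _ ⟨i | i, rfl⟩
    · exact hyM i i.2
    · exact hp i
  have hnorm : ∀ g, g * g = 1 → (∀ x ∈ N, g * x * g⁻¹ ∈ N) →
      g ∈ Subgroup.normalizer (N : Set (VL n)) := by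
    intro g gg hg
    rw [Subgroup.mem_normalizer_iff]
    refine fun x => ⟨hg x, fun hx => ?_⟩
    have := hg _ hx
    rw [inv_of_invol gg] at this
    simpa [mul_assoc, mul_cancel_invol gg, gg] using this
  have : N.Normal := Subgroup.normalizer_eq_top_iff.1
    (gen _ Subgroup.le_normalizer (hnorm r rr hr) (hnorm y yy hy))
  -- modulo `N` the group is generated by the commuting images of `ρ₁` and `y₁`
  have hcomm : (QuotientGroup.mk' N r) * (QuotientGroup.mk' N y) =
      (QuotientGroup.mk' N y) * (QuotientGroup.mk' N r) := by
    apply comm_of_sq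
    · rw [← _root_.map_mul, rr, _root_.map_one]
    · rw [← _root_.map_mul, yy, _root_.map_one]
    · rw [← _root_.map_mul, ← _root_.map_pow]
      exact (QuotientGroup.eq_one_iff _).2 hD
  have cent (c : VL n) (hcr : Commute (QuotientGroup.mk' N c) (QuotientGroup.mk' N r))
      (hcy : Commute (QuotientGroup.mk' N c) (QuotientGroup.mk' N y)) (g : VL n) :
      Commute (QuotientGroup.mk' N c) (QuotientGroup.mk' N g) := by
    have := gen ((Subgroup.centralizer {QuotientGroup.mk' N c}).comap (QuotientGroup.mk' N))
      (by
        intro x hx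
        rw [Subgroup.mem_comap]
        have : QuotientGroup.mk' N x = 1 := (QuotientGroup.eq_one_iff _).2 hx
        rw [this]; exact one_mem _)
      (by
        rw [Subgroup.mem_comap, Subgroup.mem_centralizer_singleton_iff]; exact hcr.symm)
      (by
        rw [Subgroup.mem_comap, Subgroup.mem_centralizer_singleton_iff]; exact hcy.symm)
    have hg : g ∈ (Subgroup.centralizer {QuotientGroup.mk' N c}).comap (QuotientGroup.mk' N) := by
      rw [this]; trivial
    rw [Subgroup.mem_comap, Subgroup.mem_centralizer_singleton_iff] at hg
    exact Commute.symm hg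
  have hr' := cent r (Commute.refl _) hcomm
  have hy' := cent y hcomm.symm (Commute.refl _)
  rw [commutator_def, Subgroup.commutator_le]
  intro g _ k _
  have := cent g (hr' g).symm (hy' g).symm k
  refine (QuotientGroup.eq_one_iff _).1 ?_
  refine (map_commutatorElement (QuotientGroup.mk' N) g k).trans ?_
  exact commutatorElement_eq_one_iff_commute.2 this

lemma mem_commutator_of_abelian {G : Type*} [Group G] {x : G}
    (h : Abelianization.of x = 1) : x ∈ commutator G := by
  rwa [← Abelianization.ker_of, MonoidHom.mem_ker]

/-- For `n ≥ 4`, the commutator subgroup of `VL n` is generated by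
`αᵢ = ρᵢρ₁` (`2 ≤ i ≤ n-1`), `β = y₁ρ₂ρ₁y₁`, `δ = (ρ₁y₁)²`, and has the presentation
with these generators and the relations listed in `vlCommRels`. -/
theorem stmt11 (n : ℕ) (hn : 4 ≤ n) :
    ∃ φ : PresentedGroup (vlCommRels n) →* VL n,
      Function.Injective φ ∧ φ.range = commutator (VL n) ∧
      (∀ i : Fin (n - 2), φ (PresentedGroup.of (Sum.inl i)) =
        pG ⟨(i : ℕ) + 1, by have := i.isLt; omega⟩ * pG ⟨0, by omega⟩) ∧
      φ (PresentedGroup.of (Sum.inr false)) =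
        yG ⟨0, by omega⟩ * pG ⟨1, by omega⟩ * pG ⟨0, by omega⟩ * yG ⟨0, by omega⟩ ∧
      φ (PresentedGroup.of (Sum.inr true)) = (pG ⟨0, by omega⟩ * yG ⟨0, by omega⟩) ^ 2 := by
  obtain ⟨φ, φA, φB, φD⟩ := ((VL_rel n).commRel hn).exists_hom
  have h := VL_rel n
  refine ⟨φ, ?_, ?_, φA, φB, φD⟩
  · obtain ⟨E, gE, j, f, hj, jA, jB, jD⟩ := exists_detecting_hom n hn
    have e : f.comp φ = j := by
      apply CG_hom_ext
      · intro i; rw [jA, MonoidHom.comp_apply, φA]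
      · rw [jB, MonoidHom.comp_apply, φB]
      · rw [jD, MonoidHom.comp_apply, φD]
    rw [← e, MonoidHom.coe_comp] at hj
    exact hj.of_comp
  · have i0 : (0 : ℕ) < n - 2 := by omega
    obtain ⟨y, ey⟩ : ∃ y : VL n, y = yG ⟨0, by omega⟩ := ⟨_, rfl⟩
    obtain ⟨r, er⟩ : ∃ r : VL n, r = pG ⟨0, by omega⟩ := ⟨_, rfl⟩
    have rr : r * r = 1 := er ▸ h.pp _
    have yy : y * y = 1 := ey ▸ h.yy _
    have φD' : φ cD = (r * y) ^ 2 := by rw [φD, er, ey]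
    have φB' : φ cB = y * φ (cA ⟨0, i0⟩) * y⁻¹ := by
      rw [φB, φA, inv_of_invol yy, ey]; simp only [mul_assoc, Nat.zero_add]
    -- conjugation by an element `g` maps `φ.range` into itself once it does so on generators
    have stab (g : VL n) (gA : ∀ i, g * φ (cA i) * g⁻¹ ∈ φ.range)
        (gB : g * φ cB * g⁻¹ ∈ φ.range) (gD : g * φ cD * g⁻¹ ∈ φ.range) :
        ∀ x ∈ φ.range, g * x * g⁻¹ ∈ φ.range := by
      rintro _ ⟨k, rfl⟩
      have hk : k ∈ (φ.range.comap (MulAut.conj g).toMonoidHom).comap φ := by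
        have : (φ.range.comap (MulAut.conj g).toMonoidHom).comap φ = ⊤ := by
          rw [eq_top_iff, ← PresentedGroup.closure_range_of, Subgroup.closure_le]
          rintro _ ⟨i | _ | _, rfl⟩
          · exact gA i
          · exact gB
          · exact gD
        rw [this]; trivial
      exact hk
    have mem (k : CG n) : φ k ∈ φ.range := ⟨k, rfl⟩
    have rA (i) : r * φ (cA i) * r⁻¹ = (φ (cA i))⁻¹ := by
      rw [φA, ← er, mul_inv_rev, inv_of_invol (h.pp _), inv_of_invol rr]
      simp [mul_assoc, rr]
    apply le_antisymm
    · rintro _ ⟨k, rfl⟩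
      have hk : k ∈ (commutator (VL n)).comap φ := by
        have : (commutator (VL n)).comap φ = ⊤ := by
          have pconst : ∀ k (hk : k < n - 1), Abelianization.of (pG ⟨k, hk⟩ : VL n) =
              Abelianization.of r := by
            intro k
            induction k with
            | zero => intro hk; rw [er]
            | succ k ih =>
              intro hk
              rw [← ih (by omega)]
              have := congrArg Abelianization.of (h.pb ⟨k, by omega⟩ ⟨k + 1, hk⟩ rfl)
              simp only [_root_.map_mul] at this
              -- in an abelian group the braid relation `p q p = q p q` forces `p = q`
              generalize Abelianization.of (pG ⟨k, _⟩ : VL n) = p at *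
              generalize Abelianization.of (pG ⟨k + 1, _⟩ : VL n) = q at *
              rw [mul_comm q p] at this
              exact (mul_left_cancel this).symm
          have r2 : Abelianization.of r * Abelianization.of r = 1 := by
            rw [← _root_.map_mul, rr, _root_.map_one]
          have y2 : Abelianization.of y * Abelianization.of y = 1 := by
            rw [← _root_.map_mul, yy, _root_.map_one]
          have aA (i) : φ (cA i) ∈ commutator (VL n) := by
            apply mem_commutator_of_abelian
            rw [φA, _root_.map_mul, pconst, pconst, r2]
          rw [eq_top_iff, ← PresentedGroup.closure_range_of, Subgroup.closure_le]
          rintro _ ⟨i | _ | _, rfl⟩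
          · exact aA i
          · change φ cB ∈ commutator (VL n)
            rw [φB']
            exact Subgroup.Normal.conj_mem inferInstance _ (aA _) _
          · change φ cD ∈ commutator (VL n)
            apply mem_commutator_of_abelian
            rw [φD', _root_.map_pow, _root_.map_mul, mul_pow, sq, sq, r2, y2, one_mul]
        rw [this]; trivial
      exact hk
    · apply commutator_le n hn
      · intro i; rw [← φA]; exact mem _
      · rw [← φD]; exact mem _
      · rw [← er]
        have rD : r * φ cD * r⁻¹ = φ (cD⁻¹) := by
          rw [_root_.map_inv, φD', inv_of_invol rr]
          simp [sq, mul_assoc, inv_of_invol rr, inv_of_invol yy, mul_cancel_invol rr]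
        refine stab r ?_ ?_ ?_
        · intro i; rw [rA, ← _root_.map_inv]; exact mem _
        · have e : r * φ cB * r⁻¹ = φ (cD * cB⁻¹ * cD⁻¹) := by
            rw [_root_.map_mul, _root_.map_mul, _root_.map_inv, _root_.map_inv, φB', mul_inv_rev,
              mul_inv_rev, ← rA, φD']
            simp only [sq, mul_assoc, inv_of_invol rr, inv_of_invol yy, mul_inv_rev,
              mul_cancel_invol rr, mul_cancel_invol yy]
          rw [e]; exact mem _
        · rw [rD]; exact mem _
      · rw [← ey]
        refine stab y ?_ ?_ ?_
        · intro i
          by_cases hi : (i : ℕ) = 0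
          · obtain rfl : i = ⟨0, i0⟩ := Fin.ext hi
            rw [← φB']; exact mem _
          · have e : y * φ (cA i) * y⁻¹ = φ (cA i * cD) := by
              have c := h.yc ⟨0, by omega⟩ ⟨(i : ℕ) + 1, by omega⟩ (by simp; omega)
              rw [← ey] at c
              rw [_root_.map_mul, φA, φD', ← er, ← mul_assoc, c, inv_of_invol yy]
              simp only [sq, mul_assoc, mul_cancel_invol rr]
            rw [e]; exact mem _
        · have e : y * φ cB * y⁻¹ = φ (cA ⟨0, i0⟩) := by
            rw [φB', inv_of_invol yy]
            simp only [mul_assoc, mul_cancel_invol yy, yy, mul_one]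
          rw [e]; exact mem _
        · have e : y * φ cD * y⁻¹ = φ (cD⁻¹) := by
            rw [_root_.map_inv, φD', inv_of_invol yy]
            simp only [sq, mul_assoc, inv_of_invol rr, inv_of_invol yy, mul_inv_rev, yy, mul_one]
          rw [e]; exact mem _
end

section
/- Let w be any element of the subgroup of VL_n generated by ρ_1, …, ρ_{n-1} (this subgroup maps isomorphically onto S_n under π), and let σ = π(w) ∈ S_n. Then for all 1 ≤ i ≠ j ≤ n, w κ_{i,j} w^{-1} = κ_{σ(i), σ(j)}. In particular: ρ_i κ_{i,i+1} ρ_i = κ_{i,i+1}^{-1}; ρ_i κ_{i,j} ρ_i = κ_{i+1,j} for i+2 ≤ j ≤ n; ρ_i κ_{j,i} ρ_i = κ_{j,i+1} for 1 ≤ j < i; and ρ_i κ_{k,l} ρ_i = κ_{k,l} in all other cases. -/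
/-!
It suffices to treat `w = ρ_k`: the set of `w` for which the formula holds for all pairs is
closed under products and inverses because `π` is a homomorphism.

For `w = ρ_k` and `i < j`, everything follows from the recurrence
`κ_{i,j+1} = ρ_j κ_{i,j} ρ_j` (`kappaLT_step`) by induction on `j`:
* `ρ_k` commutes with `κ_{i,j}` when `k > j` or `k + 1 < i`, by far commutativity
  (`commute_right`, `commute_left`);
* `ρ_k` commutes with `κ_{i,j}` when `i < k < j - 1`; the critical case `k = j - 2` is the braid
  relation `ρ_k ρ_{k+1} ρ_k = ρ_{k+1} ρ_k ρ_{k+1}` (`commute_mid`);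
* `ρ_i κ_{i,j} ρ_i = κ_{i+1,j}` when `i + 1 < j`; the base case `j = i + 2` is the mixed relation
  `ρ_i y_{i+1} ρ_i = ρ_{i+1} y_i ρ_{i+1}` (`conj_left`);
* `ρ_i κ_{i,i+1} ρ_i = ρ_i y_i = κ_{i,i+1}⁻¹`.

The remaining values `k = j`, `k = j - 1 > i`, `k = i - 1` are the recurrence itself and
consequences of these identities and `ρ_k² = 1`.
-/

open FreeGroup

/-- The generator `y_k` of `VL n` with 1-based subscript `k` (junk value `1` if `k` is
out of range). -/
def yN (n k : ℕ) : VL n :=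
  if h : 1 ≤ k ∧ k ≤ n - 1 then yG ⟨k - 1, by omega⟩ else 1

/-- The generator `ρ_k` of `VL n` with 1-based subscript `k` (junk value `1` if `k` is
out of range). -/
def pN (n k : ℕ) : VL n :=
  if h : 1 ≤ k ∧ k ≤ n - 1 then pG ⟨k - 1, by omega⟩ else 1

/-- For `i < j`, the element `κ_{i,j} = ρ_{j-1} ρ_{j-2} ⋯ ρ_{i+1} (y_i ρ_i) ρ_{i+1} ⋯ ρ_{j-1}`
of `VL n` (1-based subscripts); for `j = i+1` this is `y_i ρ_i`. -/
def kappaLT (n i j : ℕ) : VL n :=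
  (((List.range' (i + 1) (j - 1 - i)).map (pN n)).reverse).prod * (yN n i * pN n i) *
    ((List.range' (i + 1) (j - 1 - i)).map (pN n)).prod

/-- The element `κ_{i,j}` of `VL n`, for `1 ≤ i ≠ j ≤ n` (1-based subscripts), with the
convention `κ_{j,i} = κ_{i,j}⁻¹` for `i < j`. -/
def kappa (n i j : ℕ) : VL n := if i < j then kappaLT n i j else (kappaLT n j i)⁻¹

namespace VLAux

variable {n : ℕ}

theorem rel_eq_one {r : FreeGroup (VLGen n)} (h : r ∈ vlRels n) :
    PresentedGroup.mk (vlRels n) r = 1 :=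
  PresentedGroup.one_of_mem h

theorem p_sq (k : ℕ) : pN n k * pN n k = 1 := by
  unfold pN
  split_ifs with h
  · have := rel_eq_one (n := n) (r := fP ⟨k - 1, by omega⟩ ^ 2) (Or.inr (Or.inl ⟨_, rfl⟩))
    rw [pow_two, _root_.map_mul] at this
    exact this
  · simp

theorem y_sq (k : ℕ) : yN n k * yN n k = 1 := by
  unfold yN
  split_ifs with h
  · have := rel_eq_one (n := n) (r := fY ⟨k - 1, by omega⟩ ^ 2) (Or.inl ⟨_, rfl⟩)
    rw [pow_two, _root_.map_mul] at this
    exact this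
  · simp

theorem p_inv (k : ℕ) : (pN n k)⁻¹ = pN n k := inv_eq_of_mul_eq_one_left (p_sq k)

theorem y_inv (k : ℕ) : (yN n k)⁻¹ = yN n k := inv_eq_of_mul_eq_one_left (y_sq k)

theorem p_sq_assoc (k : ℕ) (x : VL n) : pN n k * (pN n k * x) = x := by
  rw [← mul_assoc, p_sq, one_mul]

theorem p_comm {k l : ℕ} (h : k + 2 ≤ l) : Commute (pN n k) (pN n l) := by
  unfold pN
  split_ifs with h1 h2
  · have := rel_eq_one (n := n)
      (r := fP ⟨k - 1, by omega⟩ * fP ⟨l - 1, by omega⟩ * (fP ⟨k - 1, by omega⟩)⁻¹ *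
        (fP ⟨l - 1, by omega⟩)⁻¹)
      (Or.inr (Or.inr (Or.inl ⟨_, _, by simp; omega, rfl⟩)))
    simp only [_root_.map_mul, _root_.map_inv] at this
    exact mul_inv_eq_iff_eq_mul.mp (mul_inv_eq_one.mp this)
  · exact Commute.one_right _
  · exact Commute.one_left _
  · exact Commute.one_left _

theorem y_p_comm {k l : ℕ} (h : k + 2 ≤ l ∨ l + 2 ≤ k) : Commute (yN n k) (pN n l) := by
  unfold yN pN
  split_ifs with h1 h2
  · have := rel_eq_one (n := n)
      (r := fY ⟨k - 1, by omega⟩ * fP ⟨l - 1, by omega⟩ * (fY ⟨k - 1, by omega⟩)⁻¹ *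
        (fP ⟨l - 1, by omega⟩)⁻¹)
      (Or.inr (Or.inr (Or.inr (Or.inl ⟨_, _, by simp; omega, rfl⟩))))
    simp only [_root_.map_mul, _root_.map_inv] at this
    exact mul_inv_eq_iff_eq_mul.mp (mul_inv_eq_one.mp this)
  · exact Commute.one_right _
  · exact Commute.one_left _
  · exact Commute.one_left _

theorem braid {k : ℕ} (h1 : 1 ≤ k) (h2 : k + 2 ≤ n) :
    pN n k * pN n (k + 1) * pN n k = pN n (k + 1) * pN n k * pN n (k + 1) := by
  have := rel_eq_one (n := n)
    (r := fP ⟨k - 1, by omega⟩ * fP ⟨k, by omega⟩ * fP ⟨k - 1, by omega⟩ *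
      (fP ⟨k, by omega⟩ * fP ⟨k - 1, by omega⟩ * fP ⟨k, by omega⟩)⁻¹)
    (Or.inr (Or.inr (Or.inr (Or.inr (Or.inr (Or.inl ⟨_, _, by simp; omega, rfl⟩))))))
  simp only [_root_.map_mul, _root_.map_inv] at this
  unfold pN
  rw [dif_pos (by omega), dif_pos (by omega)]
  exact mul_inv_eq_one.mp this

theorem mixed {k : ℕ} (h1 : 1 ≤ k) (h2 : k + 2 ≤ n) :
    pN n k * yN n (k + 1) * pN n k = pN n (k + 1) * yN n k * pN n (k + 1) := by
  have := rel_eq_one (n := n)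
    (r := fP ⟨k - 1, by omega⟩ * fY ⟨k, by omega⟩ * fP ⟨k - 1, by omega⟩ *
      (fP ⟨k, by omega⟩ * fY ⟨k - 1, by omega⟩ * fP ⟨k, by omega⟩)⁻¹)
    (Or.inr (Or.inr (Or.inr (Or.inr (Or.inr (Or.inr ⟨_, _, by simp; omega, rfl⟩))))))
  simp only [_root_.map_mul, _root_.map_inv] at this
  unfold pN yN
  rw [dif_pos (by omega), dif_pos (by omega), dif_pos (by omega), dif_pos (by omega)]
  exact mul_inv_eq_one.mp this

theorem kappaLT_base (i : ℕ) : kappaLT n i (i + 1) = yN n i * pN n i := by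
  simp [kappaLT]

theorem kappaLT_step {i j : ℕ} (h : i < j) :
    kappaLT n i (j + 1) = pN n j * kappaLT n i j * pN n j := by
  have e : j + 1 - 1 - i = (j - 1 - i) + 1 := by omega
  have e2 : i + 1 + (j - 1 - i) = j := by omega
  unfold kappaLT
  rw [e, List.range'_1_concat, e2]
  simp [mul_assoc]

theorem commute_right {i j k : ℕ} (h : i < j) (hk : j < k) :
    Commute (pN n k) (kappaLT n i j) := by
  induction j, h using Nat.le_induction with
  | base =>
    rw [kappaLT_base]
    exact (y_p_comm (Or.inl (by omega))).symm.mul_right (p_comm (by omega)).symm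
  | succ j hj ih =>
    rw [kappaLT_step hj]
    have c : Commute (pN n k) (pN n j) := (p_comm (by omega)).symm
    exact (c.mul_right (ih (by omega))).mul_right c

theorem commute_left {i j k : ℕ} (h : i < j) (hk : k + 1 < i) :
    Commute (pN n k) (kappaLT n i j) := by
  induction j, h using Nat.le_induction with
  | base =>
    rw [kappaLT_base]
    exact (y_p_comm (Or.inr (by omega))).symm.mul_right (p_comm (by omega))
  | succ j hj ih =>
    rw [kappaLT_step hj]
    have c : Commute (pN n k) (pN n j) := p_comm (by omega)
    exact (c.mul_right ih).mul_right c

/-- The braid and mixed relations enter at `j = i + 2`; the step holds because `ρ_i` commutes with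
`ρ_j` for `j ≥ i + 2`. -/
theorem conj_left {i j : ℕ} (hi : 1 ≤ i) (h : i + 2 ≤ j) (hj : j ≤ n) :
    pN n i * kappaLT n i j * pN n i = kappaLT n (i + 1) j := by
  induction j, h using Nat.le_induction with
  | base =>
    rw [kappaLT_step (by omega : i < i + 1), kappaLT_base, kappaLT_base]
    calc pN n i * (pN n (i + 1) * (yN n i * pN n i) * pN n (i + 1)) * pN n i
        = pN n i * pN n (i + 1) * yN n i * (pN n i * pN n (i + 1) * pN n i) := by
          simp only [mul_assoc]
      _ = pN n i * (pN n (i + 1) * yN n i * pN n (i + 1)) * pN n i * pN n (i + 1) := by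
          rw [braid hi hj]; simp only [mul_assoc]
      _ = yN n (i + 1) * pN n (i + 1) := by
          rw [← mixed hi hj]; simp only [mul_assoc, p_sq_assoc]
  | succ j hj' ih =>
    rw [kappaLT_step (by omega : i < j), kappaLT_step (by omega : i + 1 < j),
      ← ih (by omega)]
    have c : pN n i * pN n j = pN n j * pN n i := p_comm (by omega)
    calc pN n i * (pN n j * kappaLT n i j * pN n j) * pN n i
        = (pN n i * pN n j) * kappaLT n i j * (pN n j * pN n i) := by simp only [mul_assoc]
      _ = _ := by rw [← c]; nth_rw 1 [c]; simp only [mul_assoc]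

/-- At `j = k + 2`, the braid relation moves `ρ_k` past `ρ_{k+1} ρ_k` as `ρ_{k+1}`, which commutes
with `κ_{i,k}`. -/
theorem commute_mid {i j k : ℕ} (hi : 1 ≤ i) (hk : i < k) (h : k + 2 ≤ j) (hj : j ≤ n) :
    Commute (pN n k) (kappaLT n i j) := by
  induction j, h using Nat.le_induction with
  | base =>
    rw [kappaLT_step (by omega : i < k + 1), kappaLT_step hk]
    have c := (commute_right (n := n) hk (Nat.lt_succ_self k)).eq
    have b := braid (n := n) (k := k) (by omega) hj
    generalize kappaLT n i k = K at *
    rw [Nat.succ_eq_add_one] at c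
    change pN n k * _ = _ * pN n k
    calc pN n k * (pN n (k + 1) * (pN n k * K * pN n k) * pN n (k + 1))
        = (pN n k * pN n (k + 1) * pN n k) * K * pN n k * pN n (k + 1) := by
          simp only [mul_assoc]
      _ = pN n (k + 1) * pN n k * (pN n (k + 1) * K) * pN n k * pN n (k + 1) := by
          rw [b]; simp only [mul_assoc]
      _ = pN n (k + 1) * pN n k * K * (pN n (k + 1) * pN n k * pN n (k + 1)) := by
          rw [c]; simp only [mul_assoc]
      _ = _ := by rw [← b]; simp only [mul_assoc]
  | succ j hj' ih =>
    rw [kappaLT_step (by omega : i < j)]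
    have c : Commute (pN n k) (pN n j) := p_comm (by omega)
    exact (c.mul_right (ih (by omega))).mul_right c

/-- The transposition `(k, k+1)` acting on natural numbers. -/
def s (k i : ℕ) : ℕ := if i = k then k + 1 else if i = k + 1 then k else i

theorem conj_of_commute {k : ℕ} {x : VL n} (h : Commute (pN n k) x) :
    pN n k * x * pN n k = x := by
  rw [h.eq, mul_assoc, p_sq, mul_one]

theorem conj_symm {k : ℕ} {x z : VL n} (h : pN n k * x * pN n k = z) :
    pN n k * z * pN n k = x := by
  rw [← h]; simp only [mul_assoc, p_sq_assoc, p_sq, mul_one]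

/-- `ρ_k κ_{i,j} ρ_k = κ_{s(i),s(j)}` for `i < j`. For `k ≥ n` the generator `pN n k` is the junk
value `1`, so `k = n = j` gives the formal identity `κ_{i,n+1} = κ_{i,n}` rather than a statement
about `VL n`. -/
theorem conj_kappaLT {i j k : ℕ} (hi : 1 ≤ i) (h : i < j) (hj : j ≤ n) (hk : 1 ≤ k) :
    pN n k * kappaLT n i j * pN n k = kappa n (s k i) (s k j) := by
  -- positions of `k` relative to `i < j`, from right to left
  rcases lt_trichotomy k j with hkj | rfl | hkj
  · rcases lt_trichotomy k i with hki | rfl | hki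
    · obtain hk1 | rfl : k + 1 < i ∨ i = k + 1 := by omega
      · have e1 : s k i = i := by unfold s; split_ifs <;> omega
        have e2 : s k j = j := by unfold s; split_ifs <;> omega
        rw [e1, e2, kappa, if_pos h, conj_of_commute (commute_left h hk1)]
      · have e1 : s k (k + 1) = k := by unfold s; split_ifs <;> omega
        have e2 : s k j = j := by unfold s; split_ifs <;> omega
        rw [e1, e2, kappa, if_pos hkj, conj_symm (conj_left hk (by omega) hj)]
    · have e1 : s k k = k + 1 := by simp [s]
      obtain hk1 | rfl : k + 2 ≤ j ∨ j = k + 1 := by omega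
      · have e2 : s k j = j := by unfold s; split_ifs <;> omega
        rw [e1, e2, kappa, if_pos (by omega), conj_left hk hk1 hj]
      · have e2 : s k (k + 1) = k := by unfold s; split_ifs <;> omega
        rw [e1, e2, kappa, if_neg (by omega), kappaLT_base, mul_inv_rev, p_inv, y_inv]
        simp only [mul_assoc, p_sq, mul_one]
    · have e1 : s k i = i := by unfold s; split_ifs <;> omega
      obtain hk1 | rfl : k + 2 ≤ j ∨ j = k + 1 := by omega
      · have e2 : s k j = j := by unfold s; split_ifs <;> omega
        rw [e1, e2, kappa, if_pos h, conj_of_commute (commute_mid hi hki hk1 hj)]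
      · have e2 : s k (k + 1) = k := by unfold s; split_ifs <;> omega
        rw [e1, e2, kappa, if_pos hki, conj_symm (kappaLT_step hki).symm]
  · have e1 : s k i = i := by unfold s; split_ifs <;> omega
    have e2 : s k k = k + 1 := by simp [s]
    rw [e1, e2, kappa, if_pos (by omega), kappaLT_step h]
  · have e1 : s k i = i := by unfold s; split_ifs <;> omega
    have e2 : s k j = j := by unfold s; split_ifs <;> omega
    rw [e1, e2, kappa, if_pos h, conj_of_commute (commute_right h hkj)]

theorem s_injective (k : ℕ) : Function.Injective (s k) := by
  intro a b h
  unfold s at h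
  split_ifs at h <;> omega

theorem kappa_inv {i j : ℕ} (h : i ≠ j) : (kappa n i j)⁻¹ = kappa n j i := by
  unfold kappa
  split_ifs <;> first | omega | simp

theorem conj_kappa {i j k : ℕ} (hi : 1 ≤ i) (hj : 1 ≤ j) (hin : i ≤ n) (hjn : j ≤ n)
    (hij : i ≠ j) (hk : 1 ≤ k) :
    pN n k * kappa n i j * pN n k = kappa n (s k i) (s k j) := by
  rcases lt_or_gt_of_ne hij with h | h
  · rw [kappa, if_pos h, conj_kappaLT hi h hjn hk]
  · have := congrArg (·⁻¹) (conj_kappaLT hj h hin hk)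
    simp only [mul_inv_rev, p_inv] at this
    rw [kappa, if_neg (by omega), mul_assoc, this]
    exact kappa_inv fun e => hij (s_injective k e).symm

/-- The conjugation formula for all pairs of distinct indices, stated over `Fin n`
(`κ` itself takes 1-based indices). -/
theorem conj_of_mem (π : VL n →* Equiv.Perm (Fin n))
    (hπp : ∀ i : Fin (n - 1), π (pG i) =
      Equiv.swap (Fin.castLE (Nat.sub_le n 1) i) ⟨(i : ℕ) + 1, by have := i.isLt; omega⟩)
    (w : VL n) (hw : w ∈ Subgroup.closure (Set.range (pG : Fin (n - 1) → VL n))) :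
    ∀ a b : Fin n, a ≠ b → w * kappa n (a + 1) (b + 1) * w⁻¹ =
      kappa n ((π w a : Fin n) + 1) ((π w b : Fin n) + 1) := by
  induction hw using Subgroup.closure_induction with
  | mem x hx =>
    obtain ⟨k, rfl⟩ := hx
    intro a b hab
    have hk := k.isLt
    have e : pG k = pN n (k + 1) := by
      unfold pN; rw [dif_pos (by omega)]; simp
    have hs : ∀ c : Fin n, ((π (pG k) c : Fin n) : ℕ) + 1 = s (k + 1) (c + 1) := by
      intro c
      rw [hπp, Equiv.swap_apply_def]
      unfold s
      simp only [Fin.ext_iff, Fin.val_castLE]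
      split_ifs <;> simp <;> omega
    rw [hs, hs, e, p_inv]
    exact conj_kappa (by omega) (by omega) (by omega) (by omega)
      (fun h => hab (Fin.ext (by omega))) (by omega)
  | one => intro a b _; simp
  | mul x z _ _ hx hz =>
    intro a b hab
    have := hx (π z a) (π z b) ((π z).injective.ne hab)
    rw [← hz a b hab] at this
    simpa [mul_assoc] using this
  | inv x _ hx =>
    intro a b hab
    have := hx ((π x)⁻¹ a) ((π x)⁻¹ b) ((π x)⁻¹.injective.ne hab)
    simp only [Equiv.Perm.coe_inv, Equiv.apply_symm_apply] at this
    rw [_root_.map_inv, ← this]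
    simp [mul_assoc]

end VLAux

/-- Let `π : VL n → S n` be the epimorphism sending both `yᵢ` and `ρᵢ`
to the transposition `(i, i+1)`.  For every element `w` of the subgroup of `VL n` generated
by `ρ₁, …, ρ_{n-1}`, with `σ = π w`, and all `1 ≤ i ≠ j ≤ n`, we have
`w κ_{i,j} w⁻¹ = κ_{σ(i), σ(j)}`. -/
theorem stmt15 (n : ℕ) (hn : 2 ≤ n) (π : VL n →* Equiv.Perm (Fin n))
    (hπy : ∀ i : Fin (n - 1), π (yG i) =
      Equiv.swap (Fin.castLE (Nat.sub_le n 1) i) ⟨(i : ℕ) + 1, by have := i.isLt; omega⟩)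
    (hπp : ∀ i : Fin (n - 1), π (pG i) =
      Equiv.swap (Fin.castLE (Nat.sub_le n 1) i) ⟨(i : ℕ) + 1, by have := i.isLt; omega⟩)
    (w : VL n) (hw : w ∈ Subgroup.closure (Set.range (pG : Fin (n - 1) → VL n)))
    (i j : ℕ) (hi1 : 1 ≤ i) (hin : i ≤ n) (hj1 : 1 ≤ j) (hjn : j ≤ n) (hij : i ≠ j) :
    w * kappa n i j * w⁻¹ =
      kappa n (((π w ⟨i - 1, by omega⟩ : Fin n) : ℕ) + 1)
        (((π w ⟨j - 1, by omega⟩ : Fin n) : ℕ) + 1) := by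
  have := VLAux.conj_of_mem π hπp w hw ⟨i - 1, by omega⟩ ⟨j - 1, by omega⟩
    (fun h => hij (by rw [Fin.mk.injEq] at h; omega))
  simpa only [Nat.sub_add_cancel hi1, Nat.sub_add_cancel hj1] using this
end

section
/- For n ≥ 2, there is a short exact sequence 1 → PVL_n/PVL_n' → VL_n/PVL_n' → S_n → 1 induced by π, this sequence splits, the abelianization PVL_n/PVL_n' is a free abelian group of rank n(n-1)/2, and the conjugation action of S_n on PVL_n/PVL_n' (induced by any set-theoretic section of π) is faithful; consequently VL_n/PVL_n' is a crystallographic group of dimension n(n-1)/2 with holonomy group S_n. -/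
open FreeGroup

/-!
The group `VL n` is compared with the semidirect product of `ℤ ^ (n × n)` and `S n`.

* The elements `ρ i` satisfy the Coxeter relations of `S n`, and `π` sends them to the adjacent
  transpositions. By the coset normal form for the symmetric group, `π` is injective on the subgroup
  they generate, so `π` has a section `σ` with `(i, i + 1) ↦ ρ i` (`exists_section`). This splits the
  sequence already before passing to the quotient by `PVL n'`.
* Conjugating `y 0 * ρ 0` by `σ w` gives an element `λ i j` depending only on `i = w 0` and
  `j = w 1` (`exists_lam`). One has `σ v * λ i j * (σ v)⁻¹ = λ (v i) (v j)`, `λ j i = (λ i j)⁻¹` and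
  `λ i (i + 1) = y i * ρ i`. It follows that the `λ i j` with `i < j` generate the kernel of `π`
  in any quotient, in particular `PVL n / PVL n'` (`mem_closure_lam`).
* Mapping `ρ i` to `(0, s i)` and `y i` to `(e (i, i + 1) - e (i + 1, i), s i)` respects the defining
  relations (`toModel`), and kills `PVL n'` since the first factor is abelian. It sends `λ i j` to
  `e (i, j) - e (j, i)`. These vectors are linearly independent for `i < j`, so `PVL n / PVL n'`
  is free abelian of rank `n (n - 1) / 2` (`freeness`).
* An element `g` centralising the lattice has `D (w i) (w j) = D i j` for `w = π g` and all
  `i ≠ j`, where `D i j = e (i, j) - e (j, i)`. Hence `w i = i` for all `i`, so the action of `S n`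
  is faithful.
-/

namespace VLaux
/-! ### Sections of a map onto the symmetric group -/

section Coxeter
variable {H : Type*} [Group H]

/-- The descending word `R (k + l - 1) * ⋯ * R (k + 1) * R k` of length `l`. -/
def desc (R : ℕ → H) (k : ℕ) : ℕ → H
  | 0 => 1
  | l + 1 => R (k + l) * desc R k l

variable {R : ℕ → H}

theorem desc_succ' (k l : ℕ) : desc R k (l + 1) = desc R (k + 1) l * R k := by
  induction l with
  | zero => simp [desc]
  | succ l ih =>
    rw [desc, ih, desc, ← mul_assoc]
    congr 3
    omega

theorem desc_comm_of_lt (far : ∀ i j, i + 2 ≤ j → R i * R j = R j * R i) (k l j : ℕ)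
    (hj : j + 2 ≤ k) : desc R k l * R j = R j * desc R k l := by
  induction l with
  | zero => simp [desc]
  | succ l ih => rw [desc, mul_assoc, ih, ← mul_assoc, ← mul_assoc, far j (k + l) (by omega)]

theorem desc_comm_of_gt (far : ∀ i j, i + 2 ≤ j → R i * R j = R j * R i) (k l j : ℕ)
    (hj : k + l + 1 ≤ j) : desc R k l * R j = R j * desc R k l := by
  induction l with
  | zero => simp [desc]
  | succ l ih =>
    rw [desc, mul_assoc, ih (by omega), ← mul_assoc, ← mul_assoc, far (k + l) j (by omega)]

/-- Moving a letter that occurs in a descending word (other than its last one) across the word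
lowers the index of the letter by one. -/
theorem desc_mul (N : ℕ) (far : ∀ i j, i + 2 ≤ j → R i * R j = R j * R i)
    (braid : ∀ i, i + 1 < N → R i * R (i + 1) * R i = R (i + 1) * R i * R (i + 1))
    (k l j : ℕ) (hj : k ≤ j) (hjl : j + 1 < k + l) (hN : k + l ≤ N) :
    desc R k l * R (j + 1) = R j * desc R k l := by
  induction l with
  | zero => omega
  | succ l ih =>
    rcases Nat.lt_or_ge (j + 1) (k + l) with h | h
    · rw [desc, mul_assoc, ih h (by omega), ← mul_assoc, ← mul_assoc, far j (k + l) (by omega)]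
    · obtain ⟨l, rfl⟩ : ∃ l', l = l' + 1 := ⟨l - 1, by omega⟩
      obtain rfl : j = k + l := by omega
      have e : k + (l + 1) = k + l + 1 := by omega
      rw [desc, desc, e, mul_assoc, mul_assoc, desc_comm_of_gt far k l _ le_rfl, ← mul_assoc,
        ← mul_assoc, ← braid _ (by omega)]
      simp only [mul_assoc]

/-- Right coset representatives in a group generated by elements satisfying the Coxeter relations of
type `A`: every element of `⟨R 0, …, R m⟩` is an element of `⟨R 0, …, R (m - 1)⟩` times a descending
word `R m * ⋯ * R k`. The products of this form are stable under right multiplication by each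
`R j` with `j ≤ m`. -/
theorem normal_form (N : ℕ) (sq : ∀ i, R i * R i = 1)
    (far : ∀ i j, i + 2 ≤ j → R i * R j = R j * R i)
    (braid : ∀ i, i + 1 < N → R i * R (i + 1) * R i = R (i + 1) * R i * R (i + 1))
    (m : ℕ) (hm : m < N) (x : H) (hx : x ∈ Subgroup.closure (R '' Set.Iio (m + 1))) :
    ∃ h ∈ Subgroup.closure (R '' Set.Iio m), ∃ k l, k + l = m + 1 ∧ x = h * desc R k l := by
  have key : ∀ y : H, (∃ h ∈ Subgroup.closure (R '' Set.Iio m), ∃ k l, k + l = m + 1 ∧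
      y = h * desc R k l) → ∀ j ≤ m, ∃ h ∈ Subgroup.closure (R '' Set.Iio m),
      ∃ k l, k + l = m + 1 ∧ y * R j = h * desc R k l := by
    rintro y ⟨h, hh, k, l, hkl, rfl⟩ j hj
    have mem : ∀ i < m, R i ∈ Subgroup.closure (R '' Set.Iio m) := fun i hi =>
      Subgroup.subset_closure ⟨i, hi, rfl⟩
    rcases Nat.lt_trichotomy j k with hjk | rfl | hjk
    · rcases Nat.lt_or_ge (j + 1) k with h1 | h1
      · exact ⟨h * R j, mul_mem hh (mem j (by omega)), k, l, hkl, by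
          rw [mul_assoc, desc_comm_of_lt far k l j (by omega), mul_assoc]⟩
      · obtain rfl : k = j + 1 := by omega
        exact ⟨h, hh, j, l + 1, by omega, by rw [desc_succ', mul_assoc]⟩
    · obtain ⟨l, rfl⟩ : ∃ l', l = l' + 1 := ⟨l - 1, by omega⟩
      exact ⟨h, hh, j + 1, l, by omega, by rw [desc_succ', mul_assoc, mul_assoc, sq, mul_one]⟩
    · obtain ⟨j, rfl⟩ : ∃ j', j = j' + 1 := ⟨j - 1, by omega⟩
      exact ⟨h * R j, mul_mem hh (mem j (by omega)), k, l, hkl, by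
        rw [mul_assoc, desc_mul N far braid k l j (by omega) (by omega) (by omega), mul_assoc]⟩
  induction hx using Subgroup.closure_induction_right with
  | one => exact ⟨1, one_mem _, m + 1, 0, rfl, by simp [desc]⟩
  | mul_right x y hy _ ih =>
    rename_i h'
    obtain ⟨j, hj, rfl⟩ := h'
    exact key _ ih j (Nat.lt_succ_iff.mp hj)
  | mul_inv_cancel x y hy _ ih =>
    rename_i h'
    obtain ⟨j, hj, rfl⟩ := h'
    rw [← eq_inv_of_mul_eq_one_left (sq j)]
    exact key _ ih j (Nat.lt_succ_iff.mp hj)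

/-- A homomorphism sending `R i` to the transposition `(i, i + 1)` is injective on `⟨R 0, R 1, …⟩`.
In the normal form `h * (R m * ⋯ * R k)`, the image of `h` fixes `m + 1` and the image of the
descending word sends `k` to `m + 1`, so an element of the kernel has an empty descending word. -/
theorem eq_one_of_map {N : ℕ} (sq : ∀ i, R i * R i = 1)
    (far : ∀ i j, i + 2 ≤ j → R i * R j = R j * R i)
    (braid : ∀ i, i + 1 < N → R i * R (i + 1) * R i = R (i + 1) * R i * R (i + 1))
    (φ : H →* Equiv.Perm (Fin (N + 1)))
    (hφ : ∀ i : Fin N, φ (R i) = Equiv.swap i.castSucc i.succ) (m : ℕ) (hm : m ≤ N) (x : H)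
    (hx : x ∈ Subgroup.closure (R '' Set.Iio m)) (h1 : φ x = 1) : x = 1 := by
  induction m generalizing x with
  | zero => simpa using hx
  | succ m ih =>
    obtain ⟨h, hh, k, l, hkl, rfl⟩ := normal_form N sq far braid m (by omega) x hx
    have hfix : φ h ⟨m + 1, by omega⟩ = ⟨m + 1, by omega⟩ := by
      clear h1 hx
      induction hh using Subgroup.closure_induction with
      | one => simp
      | mem x hx =>
        obtain ⟨i, hi, rfl⟩ := hx
        have hi' : i < m := hi
        rw [hφ ⟨i, by omega⟩]
        apply Equiv.swap_apply_of_ne_of_ne <;> simp [Fin.ext_iff] <;> omega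
      | mul x y _ _ hx hy => simp [hx, hy]
      | inv x _ hx => rw [_root_.map_inv, Equiv.Perm.inv_eq_iff_eq, hx]
    have hd : ∀ l, (hl : k + l ≤ N) → φ (desc R k l) ⟨k, by omega⟩ = ⟨k + l, by omega⟩ := by
      intro l
      induction l with
      | zero => simp [desc]
      | succ l ih =>
        intro hl
        rw [desc, _root_.map_mul, Equiv.Perm.mul_apply, ih (by omega), hφ ⟨k + l, by omega⟩]
        exact Equiv.swap_apply_left _ _
    have h2 := congrArg (fun p => p ⟨k, by omega⟩) h1
    simp only [_root_.map_mul, Equiv.Perm.mul_apply, hd l (by omega), hkl, hfix] at h2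
    have h3 : m + 1 = k := by simpa using h2
    obtain rfl : l = 0 := by omega
    simp only [desc, mul_one] at h1 ⊢
    exact ih (by omega) h hh h1

/-- If elements `r i` satisfy the Coxeter relations of type `A` and `φ (r i)` is the transposition
`(i, i + 1)`, then `(i, i + 1) ↦ r i` extends to a homomorphic section of `φ`. -/
theorem exists_section {N : ℕ} (r : Fin N → H) (sq : ∀ i, r i * r i = 1)
    (far : ∀ i j : Fin N, (i : ℕ) + 2 ≤ j → r i * r j = r j * r i)
    (braid : ∀ i j : Fin N, (j : ℕ) = i + 1 → r i * r j * r i = r j * r i * r j)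
    (φ : H →* Equiv.Perm (Fin (N + 1)))
    (hφ : ∀ i : Fin N, φ (r i) = Equiv.swap i.castSucc i.succ) :
    ∃ σ : Equiv.Perm (Fin (N + 1)) →* H, (∀ i : Fin N,
      σ (Equiv.swap i.castSucc i.succ) = r i) ∧ ∀ w, φ (σ w) = w := by
  -- padding by `1` beyond `N` keeps the square and commutation relations for all indices
  let R : ℕ → H := fun i => if h : i < N then r ⟨i, h⟩ else 1
  have hR : ∀ i : Fin N, R i = r i := fun i => by simp [R]
  have sq' : ∀ i, R i * R i = 1 := fun i => by
    by_cases h : i < N <;> simp [R, h, sq]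
  have far' : ∀ i j, i + 2 ≤ j → R i * R j = R j * R i := fun i j hij => by
    by_cases h : j < N
    · simp only [R, h, show i < N by omega, dif_pos]
      exact far _ _ hij
    · simp [R, h]
  have braid' : ∀ i, i + 1 < N → R i * R (i + 1) * R i = R (i + 1) * R i * R (i + 1) :=
    fun i hi => by
      simp only [R, hi, show i < N by omega, dif_pos]
      exact braid _ _ rfl
  have hφ' : ∀ i : Fin N, φ (R i) = Equiv.swap i.castSucc i.succ := fun i => by rw [hR, hφ]
  let P := Subgroup.closure (R '' Set.Iio N)
  let ψ : P →* Equiv.Perm (Fin (N + 1)) := φ.comp P.subtype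
  have memP : ∀ i : Fin N, r i ∈ P := fun i => Subgroup.subset_closure ⟨i, i.2, hR i⟩
  have hinj : Function.Injective ψ := by
    rw [injective_iff_map_eq_one]
    rintro ⟨x, hx⟩ h
    exact Subtype.ext (eq_one_of_map sq' far' braid' φ hφ' N le_rfl x hx h)
  have hsurj : Function.Surjective ψ := by
    rw [← MonoidHom.mrange_eq_top, eq_top_iff, ← Equiv.Perm.mclosure_swap_castSucc_succ N,
      Submonoid.closure_le]
    rintro _ ⟨i, rfl⟩
    exact ⟨⟨r i, memP i⟩, hφ i⟩
  let e := MulEquiv.ofBijective ψ ⟨hinj, hsurj⟩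
  refine ⟨P.subtype.comp e.symm.toMonoidHom, fun i => ?_, fun w => e.apply_symm_apply w⟩
  have : e.symm (Equiv.swap i.castSucc i.succ) = ⟨r i, memP i⟩ := by
    rw [MulEquiv.symm_apply_eq]
    exact (hφ i).symm
  simp [this]
end Coxeter

/-! ### The semidirect product model -/

section Model
variable {n : ℕ}

/-- The antisymmetric vector `e (i, j) - e (j, i)`, written multiplicatively. -/
def D (i j : Fin n) : Fin n × Fin n → Multiplicative ℤ :=
  Pi.mulSingle (i, j) (Multiplicative.ofAdd 1) * (Pi.mulSingle (j, i) (Multiplicative.ofAdd 1))⁻¹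

/-- The semidirect product of `ℤ ^ (n × n)` (written multiplicatively) and `S n`, where `S n` permutes
the coordinates through its diagonal action on pairs. The antisymmetric vectors in it form the
lattice of interest; keeping all pairs makes the action a plain permutation of coordinates. -/
abbrev Model (n : ℕ) : Type :=
  (Fin n × Fin n → Multiplicative ℤ) ⋊[mulAutArrow] Equiv.Perm (Fin n)

theorem act_mulSingle (w : Equiv.Perm (Fin n)) (p : Fin n × Fin n) (t : Multiplicative ℤ) :
    (mulAutArrow w : MulAut (Fin n × Fin n → Multiplicative ℤ)) (Pi.mulSingle p t) =
      Pi.mulSingle (w p.1, w p.2) t := by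
  funext q
  have : (mulAutArrow w : MulAut (Fin n × Fin n → Multiplicative ℤ)) (Pi.mulSingle p t) q =
    Pi.mulSingle (M := fun _ => Multiplicative ℤ) p t (w⁻¹ q.1, w⁻¹ q.2) := rfl
  rw [this, Pi.mulSingle_apply, Pi.mulSingle_apply]
  congr 1
  simp only [Prod.ext_iff, Equiv.Perm.inv_eq_iff_eq]

theorem act_D (w : Equiv.Perm (Fin n)) (i j : Fin n) :
    (mulAutArrow w : MulAut (Fin n × Fin n → Multiplicative ℤ)) (D i j) = D (w i) (w j) := by
  simp only [D, _root_.map_mul, _root_.map_inv, act_mulSingle]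

theorem D_mul_D_swap (i j : Fin n) : D i j * D j i = 1 := by
  rw [D, D, ← div_eq_mul_inv, ← div_eq_mul_inv, div_mul_div_cancel, div_self']

theorem D_apply_self {i j : Fin n} (h : i ≠ j) : D i j (i, j) = Multiplicative.ofAdd 1 := by
  simp [D, h]

theorem D_apply_of_lt {i j k l : Fin n} (h : i < j) (h' : k < l) :
    D i j (k, l) = if (k, l) = (i, j) then Multiplicative.ofAdd 1 else 1 := by
  have : (k, l) ≠ (j, i) := by
    rintro ⟨⟩
    exact absurd h h'.asymm
  simp [D, Pi.mulSingle_apply, this]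

theorem eq_of_D_eq {i j k l : Fin n} (h : i ≠ j) (e : D k l = D i j) : k = i ∧ l = j := by
  have h1 := congrFun e (i, j)
  rw [D_apply_self h] at h1
  simp only [D, Pi.mul_apply, Pi.inv_apply, Pi.mulSingle_apply] at h1
  by_cases c : (i, j) = (k, l)
  · cases c; exact ⟨rfl, rfl⟩
  · rw [if_neg c] at h1
    split_ifs at h1 <;> exact absurd h1 (by decide)

/-- The image of `ρ` in the model: the bare transposition `(i, j)`. -/
def mR (i j : Fin n) : Model n := ⟨1, Equiv.swap i j⟩

/-- The image of `y` in the model: the transposition `(i, j)` twisted by the vector `D i j`. -/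
def mY (i j : Fin n) : Model n := ⟨D i j, Equiv.swap i j⟩

theorem swap_braid {i j k : Fin n} (hij : i ≠ j) (hjk : j ≠ k) (hik : i ≠ k) :
    Equiv.swap i j * Equiv.swap j k * Equiv.swap i j =
      Equiv.swap j k * Equiv.swap i j * Equiv.swap j k := by
  rw [Equiv.swap_mul_swap_mul_swap hij hik, Equiv.swap_comm j k, Equiv.swap_comm i j,
    Equiv.swap_mul_swap_mul_swap hjk.symm hik.symm, Equiv.swap_comm]

theorem swap_far {i j k l : Fin n} (h1 : i ≠ k) (h2 : i ≠ l) (h3 : j ≠ k) (h4 : j ≠ l) :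
    Equiv.swap i j * Equiv.swap k l = Equiv.swap k l * Equiv.swap i j := by
  ext x
  simp only [Equiv.Perm.mul_apply, Equiv.swap_apply_def]
  grind

theorem mY_sq (i j : Fin n) : mY i j * mY i j = 1 := by
  ext1 <;> simp [mY, act_D, D_mul_D_swap]

theorem mR_sq (i j : Fin n) : mR i j * mR i j = 1 := by
  ext1 <;> simp [mR]

theorem mR_far {i j k l : Fin n} (h1 : i ≠ k) (h2 : i ≠ l) (h3 : j ≠ k) (h4 : j ≠ l) :
    mR i j * mR k l = mR k l * mR i j := by
  ext1
  · simp [mR]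
  · simp [mR, swap_far h1 h2 h3 h4]

theorem mY_far {i j k l : Fin n} (h1 : i ≠ k) (h2 : i ≠ l) (h3 : j ≠ k) (h4 : j ≠ l) :
    mY i j * mR k l = mR k l * mY i j := by
  ext1
  · simp [mR, mY, act_D, Equiv.swap_apply_of_ne_of_ne h1 h2, Equiv.swap_apply_of_ne_of_ne h3 h4]
  · simp [mR, mY, swap_far h1 h2 h3 h4]

theorem mR_braid {i j k : Fin n} (hij : i ≠ j) (hjk : j ≠ k) (hik : i ≠ k) :
    mR i j * mR j k * mR i j = mR j k * mR i j * mR j k := by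
  ext1
  · simp [mR]
  · simpa [mR] using swap_braid hij hjk hik

theorem mY_braid {i j k : Fin n} (hij : i ≠ j) (hjk : j ≠ k) (hik : i ≠ k) :
    mY i j * mY j k * mY i j = mY j k * mY i j * mY j k := by
  ext1
  · simp only [mY, SemidirectProduct.mul_left, SemidirectProduct.mul_right, act_D,
      Equiv.Perm.mul_apply, Equiv.swap_apply_left, Equiv.swap_apply_right,
      Equiv.swap_apply_of_ne_of_ne hik.symm hjk.symm, Equiv.swap_apply_of_ne_of_ne hij hik]
    rw [mul_comm, mul_left_comm, mul_assoc]
    ac_rfl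
  · simpa [mY] using swap_braid hij hjk hik

theorem mix_braid {i j k : Fin n} (hij : i ≠ j) (hjk : j ≠ k) (hik : i ≠ k) :
    mR i j * mY j k * mR i j = mR j k * mY i j * mR j k := by
  ext1
  · simp only [mY, mR, SemidirectProduct.mul_left, SemidirectProduct.mul_right, act_D,
      Equiv.swap_apply_left, Equiv.swap_apply_right, _root_.map_one,
      Equiv.swap_apply_of_ne_of_ne hik.symm hjk.symm, Equiv.swap_apply_of_ne_of_ne hij hik]
  · simpa [mY, mR] using swap_braid hij hjk hik

end Model

/-! ### The elements `λ i j` -/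

section Lam
variable {m : ℕ} {Q : Type*} [Group Q]

/-- The pointwise stabiliser of `{0, 1}` in `S (m + 2)` is generated by the transpositions
`(i, i + 1)` with `2 ≤ i`, stated as an induction principle. -/
theorem stabilizer_induction {p : Equiv.Perm (Fin (m + 2)) → Prop} (one : p 1)
    (mul : ∀ v w, p v → p w → p (v * w))
    (gen : ∀ i : Fin (m + 1), 2 ≤ (i : ℕ) → p (Equiv.swap i.castSucc i.succ))
    (w : Equiv.Perm (Fin (m + 2))) (h0 : w 0 = 0) (h1 : w 1 = 1) : p w := by
  obtain ⟨⟨k, e⟩, rfl⟩ := Equiv.Perm.decomposeFin.symm.surjective w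
  rw [Equiv.Perm.decomposeFin_symm_apply_zero] at h0
  subst h0
  obtain ⟨⟨k, e⟩, rfl⟩ := Equiv.Perm.decomposeFin.symm.surjective e
  have hk : k = 0 := Fin.succ_injective _ (by simpa using h1)
  subst hk
  rcases m with _ | m
  · convert one
    ext x
    fin_cases x <;> simp
  -- `ext2` extends a permutation by two fixed points at the start
  let ext2 : Equiv.Perm (Fin (m + 1)) → Equiv.Perm (Fin (m + 1 + 2)) :=
    fun e => Equiv.Perm.decomposeFin.symm (0, Equiv.Perm.decomposeFin.symm (0, e))
  have hmul : ∀ e f, ext2 (e * f) = ext2 e * ext2 f := fun e f => by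
    ext x
    refine Fin.cases (by simp [ext2]) (fun x => Fin.cases (by simp [ext2]) (fun x => ?_) x) x
    simp [ext2]
  have hone : ext2 1 = 1 := by
    ext x
    refine Fin.cases (by simp [ext2]) (fun x => Fin.cases (by simp [ext2]) (fun x => ?_) x) x
    simp [ext2]
  have hgen : ∀ i : Fin m, ext2 (Equiv.swap i.castSucc i.succ) =
      Equiv.swap i.succ.succ.castSucc i.succ.succ.succ := fun i => by
    ext x
    refine Fin.cases ?_ (fun x => Fin.cases ?_ (fun x => ?_) x) x
    · simp [ext2, Equiv.swap_apply_def, Fin.ext_iff]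
    · simp [ext2, Equiv.swap_apply_def, Fin.ext_iff]
    · simp only [ext2, Equiv.Perm.decomposeFin_symm_apply_succ, Equiv.swap_self, Equiv.refl_apply,
        Equiv.swap_apply_def, Fin.ext_iff, Fin.val_succ, Fin.val_castSucc]
      split_ifs <;> simp_all
  change p (ext2 e)
  have he : e ∈ Submonoid.closure (Set.range fun i : Fin m => Equiv.swap i.castSucc i.succ) := by
    rw [Equiv.Perm.mclosure_swap_castSucc_succ]; trivial
  induction he using Submonoid.closure_induction with
  | one => rwa [hone]
  | mem x hx =>
    obtain ⟨i, rfl⟩ := hx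
    simp only [hgen]
    exact gen _ (by simp)
  | mul x y _ _ hx hy => rw [hmul]; exact mul _ _ (hx (by simp)) (hy (by simp))

theorem exists_perm (i j : Fin (m + 2)) (h : i ≠ j) :
    ∃ w : Equiv.Perm (Fin (m + 2)), w 0 = i ∧ w 1 = j := by
  have hk : Equiv.swap 0 i j ≠ 0 := fun e => h <| by
    rw [Equiv.swap_apply_eq_iff, Equiv.swap_apply_left] at e; exact e.symm
  refine ⟨Equiv.swap 0 i * Equiv.swap 1 (Equiv.swap 0 i j), ?_, ?_⟩
  · rw [Equiv.Perm.mul_apply, Equiv.swap_apply_of_ne_of_ne (by simp) hk.symm,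
      Equiv.swap_apply_left]
  · rw [Equiv.Perm.mul_apply, Equiv.swap_apply_left, Equiv.swap_apply_self]

/-- Given `y i` and `r i` satisfying the relations of the virtual triplet group other than the braid
relation for `y`, put `λ i j = σ w * (y 0 * r 0) * (σ w)⁻¹` for any `w` with `w 0 = i`, `w 1 = j`.
This does not depend on `w`, because the stabiliser of `0` and `1` is generated by the `r i` with
`2 ≤ i`, which commute with `y 0 * r 0`. Hence `S (m + 2)` permutes the `λ i j` through their
indices; moreover `λ j i = (λ i j)⁻¹` and `λ i (i + 1) = y i * r i`. -/
theorem exists_lam (y r : Fin (m + 1) → Q) (σ : Equiv.Perm (Fin (m + 2)) →* Q)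
    (hσ : ∀ i : Fin (m + 1), σ (Equiv.swap i.castSucc i.succ) = r i)
    (sqy : ∀ i, y i * y i = 1) (sqr : ∀ i, r i * r i = 1)
    (rfar : ∀ i j : Fin (m + 1), (i : ℕ) + 2 ≤ j → r i * r j = r j * r i)
    (yfar : ∀ i j : Fin (m + 1), (i : ℕ) + 2 ≤ j → y i * r j = r j * y i)
    (rbraid : ∀ i j : Fin (m + 1), (j : ℕ) = i + 1 → r i * r j * r i = r j * r i * r j)
    (mixed : ∀ i j : Fin (m + 1), (j : ℕ) = i + 1 → r i * y j * r i = r j * y i * r j) :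
    ∃ lam : Fin (m + 2) → Fin (m + 2) → Q,
      (∀ v i j, i ≠ j → σ v * lam i j * (σ v)⁻¹ = lam (v i) (v j)) ∧
      (∀ i j, i ≠ j → lam j i = (lam i j)⁻¹) ∧
      (∀ i : Fin (m + 1), lam i.castSucc i.succ = y i * r i) := by
  classical
  let a : Q := y 0 * r 0
  have stab : ∀ w : Equiv.Perm (Fin (m + 2)), w 0 = 0 → w 1 = 1 → σ w * a = a * σ w := by
    refine fun w => stabilizer_induction (p := fun w => σ w * a = a * σ w) (by simp) ?_ ?_ w
    · intro v w hv hw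
      rw [_root_.map_mul, mul_assoc, hw, ← mul_assoc, hv, mul_assoc]
    · intro i hi
      rw [hσ, ← mul_assoc, ← yfar 0 i (by simpa using hi), mul_assoc,
        ← rfar 0 i (by simpa using hi), ← mul_assoc]
  let lam : Fin (m + 2) → Fin (m + 2) → Q := fun i j =>
    if h : i ≠ j then σ (exists_perm i j h).choose * a * (σ (exists_perm i j h).choose)⁻¹ else 1
  have hlam : ∀ w : Equiv.Perm (Fin (m + 2)), lam (w 0) (w 1) = σ w * a * (σ w)⁻¹ := by
    intro w
    have h : w 0 ≠ w 1 := w.injective.ne (by simp)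
    simp only [lam, dif_pos h]
    obtain ⟨e0, e1⟩ := (exists_perm _ _ h).choose_spec
    set v := (exists_perm _ _ h).choose
    have := stab (v⁻¹ * w) (by simp [← e0]) (by simp [← e1])
    rw [_root_.map_mul, _root_.map_inv, mul_assoc, inv_mul_eq_iff_eq_mul] at this
    rw [this]
    group
  have equi : ∀ v i j, i ≠ j → σ v * lam i j * (σ v)⁻¹ = lam (v i) (v j) := by
    intro v i j h
    obtain ⟨w, rfl, rfl⟩ := exists_perm i j h
    rw [hlam, ← Equiv.Perm.mul_apply, ← Equiv.Perm.mul_apply, hlam, _root_.map_mul]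
    group
  have base : lam 0 1 = a := by simpa using hlam 1
  have base' : lam 1 0 = a⁻¹ := by
    have h := equi (Equiv.swap (Fin.castSucc 0) (Fin.succ 0)) 0 1 (by simp)
    rw [hσ, base] at h
    have e0 : Equiv.swap (Fin.castSucc (0 : Fin (m + 1))) (Fin.succ 0) 0 = 1 :=
      Equiv.swap_apply_left _ _
    have e1 : Equiv.swap (Fin.castSucc (0 : Fin (m + 1))) (Fin.succ 0) 1 = 0 :=
      Equiv.swap_apply_right _ _
    rw [e0, e1] at h
    rw [← h]
    simp only [a, mul_inv_rev, ← eq_inv_of_mul_eq_one_left (sqy 0),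
      ← eq_inv_of_mul_eq_one_left (sqr 0)]
    rw [mul_assoc, mul_assoc, sqr, mul_one]
  refine ⟨lam, equi, ?_, ?_⟩
  · intro i j h
    obtain ⟨w, rfl, rfl⟩ := exists_perm i j h
    rw [← equi w 0 1 (by simp), ← equi w 1 0 (by simp), base, base']
    group
  · intro i
    induction i using Fin.induction with
    | zero => exact base
    | succ i ih =>
      have hb : r i.castSucc * r i.succ * r i.castSucc = r i.succ * r i.castSucc * r i.succ :=
        rbraid _ _ (by simp)
      have hm : r i.castSucc * y i.succ * r i.castSucc = r i.succ * y i.castSucc * r i.succ :=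
        mixed _ _ (by simp)
      -- `s i * s (i + 1)` sends `(i, i + 1)` to `(i + 1, i + 2)`
      have h := equi (Equiv.swap i.castSucc.castSucc i.castSucc.succ *
        Equiv.swap i.succ.castSucc i.succ.succ) i.castSucc.castSucc i.castSucc.succ
        (by simp [Fin.ext_iff])
      have e0 : (Equiv.swap i.castSucc.castSucc i.castSucc.succ *
        Equiv.swap i.succ.castSucc i.succ.succ) i.castSucc.castSucc = i.succ.castSucc := by
        rw [Equiv.Perm.mul_apply, Equiv.swap_apply_of_ne_of_ne (x := i.castSucc.castSucc),
          Equiv.swap_apply_left, Fin.succ_castSucc] <;> simp [Fin.ext_iff] <;> omega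
      have e1 : (Equiv.swap i.castSucc.castSucc i.castSucc.succ *
        Equiv.swap i.succ.castSucc i.succ.succ) i.castSucc.succ = i.succ.succ := by
        rw [Equiv.Perm.mul_apply, ← Fin.succ_castSucc, Equiv.swap_apply_left,
          Equiv.swap_apply_of_ne_of_ne] <;> simp [Fin.ext_iff] <;> omega
      rw [e0, e1, ih, _root_.map_mul, hσ, hσ] at h
      rw [← h, mul_inv_rev, ← eq_inv_of_mul_eq_one_left (sqr _),
        ← eq_inv_of_mul_eq_one_left (sqr _)]
      calc _ = r i.castSucc * r i.succ * y i.castSucc *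
            (r i.castSucc * r i.succ * r i.castSucc) := by simp only [mul_assoc]
        _ = r i.castSucc * (r i.succ * y i.castSucc * r i.succ) * r i.castSucc * r i.succ := by
            rw [hb]; simp only [mul_assoc]
        _ = (r i.castSucc * r i.castSucc) * y i.succ * (r i.castSucc * r i.castSucc) *
            r i.succ := by rw [← hm]; simp only [mul_assoc]
        _ = y i.succ * r i.succ := by rw [sqr]; simp

/-- The subgroup generated by the `λ i j` with `i < j` is stable under conjugation by `σ`, and it
contains `q * (σ (π q))⁻¹` for each generator `q`, hence for every `q`. On `π.ker` this says that
the `λ i j` generate it. -/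
theorem mem_closure_lam (y r : Fin (m + 1) → Q) (σ : Equiv.Perm (Fin (m + 2)) →* Q)
    (hσ : ∀ i : Fin (m + 1), σ (Equiv.swap i.castSucc i.succ) = r i)
    (sqr : ∀ i, r i * r i = 1)
    (lam : Fin (m + 2) → Fin (m + 2) → Q)
    (equi : ∀ v i j, i ≠ j → σ v * lam i j * (σ v)⁻¹ = lam (v i) (v j))
    (anti : ∀ i j, i ≠ j → lam j i = (lam i j)⁻¹)
    (simple : ∀ i : Fin (m + 1), lam i.castSucc i.succ = y i * r i)
    (π : Q →* Equiv.Perm (Fin (m + 2)))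
    (hy : ∀ i, π (y i) = Equiv.swap i.castSucc i.succ)
    (hr : ∀ i, π (r i) = Equiv.swap i.castSucc i.succ)
    (gen : Subgroup.closure (Set.range y ∪ Set.range r) = ⊤) (q : Q) :
    q * (σ (π q))⁻¹ ∈ Subgroup.closure {x | ∃ i j, i < j ∧ lam i j = x} := by
  set B := Subgroup.closure {x | ∃ i j, i < j ∧ lam i j = x}
  have hB : ∀ i j, i ≠ j → lam i j ∈ B := by
    intro i j h
    rcases lt_or_gt_of_ne h with h' | h'
    · exact Subgroup.subset_closure ⟨i, j, h', rfl⟩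
    · rw [anti j i h'.ne]
      exact inv_mem (Subgroup.subset_closure ⟨j, i, h', rfl⟩)
  have norm : ∀ v, ∀ b ∈ B, σ v * b * (σ v)⁻¹ ∈ B := by
    intro v b hb
    induction hb using Subgroup.closure_induction with
    | one => simp
    | mem x hx =>
      obtain ⟨i, j, h, rfl⟩ := hx
      rw [equi v i j h.ne]
      exact hB _ _ (v.injective.ne h.ne)
    | mul x y _ _ hx hy =>
      convert mul_mem hx hy using 1
      group
    | inv x _ hx =>
      convert inv_mem hx using 1
      group
  have hq : q ∈ Subgroup.closure (Set.range y ∪ Set.range r) := by rw [gen]; trivial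
  induction hq using Subgroup.closure_induction with
  | one => simp
  | mem x hx =>
    rcases hx with ⟨i, rfl⟩ | ⟨i, rfl⟩
    · rw [hy, hσ, ← eq_inv_of_mul_eq_one_left (sqr i), ← simple]
      exact hB _ _ (by simp [Fin.ext_iff])
    · rw [hr, hσ, mul_inv_cancel]
      exact one_mem _
  | mul p q _ _ hp hq =>
    convert mul_mem hp (norm (π p) _ hq) using 1
    rw [_root_.map_mul, _root_.map_mul]
    group
  | inv q _ hq =>
    convert norm (π q)⁻¹ _ (inv_mem hq) using 1
    rw [_root_.map_inv, _root_.map_inv]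
    group
end Lam

/-! ### The presentation of `VL n` -/

section VLfacts
variable {m : ℕ}

theorem rel_eq_one {r : FreeGroup (VLGen (m + 2))} (h : r ∈ vlRels (m + 2)) :
    (PresentedGroup.mk (vlRels (m + 2)) r) = 1 :=
  PresentedGroup.one_of_mem h

theorem vl_y_sq (i : Fin (m + 1)) : (yG i * yG i : VL (m + 2)) = 1 := by
  have h := rel_eq_one (m := m) (r := fY i ^ 2) (Or.inl ⟨i, rfl⟩)
  rwa [map_pow, sq] at h

theorem vl_p_sq (i : Fin (m + 1)) : (pG i * pG i : VL (m + 2)) = 1 := by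
  have h := rel_eq_one (m := m) (r := fP i ^ 2) (Or.inr (Or.inl ⟨i, rfl⟩))
  rwa [map_pow, sq] at h

theorem vl_p_far (i j : Fin (m + 1)) (hij : (i : ℕ) + 2 ≤ j) :
    (pG i * pG j : VL (m + 2)) = pG j * pG i := by
  have h := rel_eq_one (m := m) (r := fP i * fP j * (fP i)⁻¹ * (fP j)⁻¹)
    (Or.inr (Or.inr (Or.inl ⟨i, j, hij, rfl⟩)))
  simp only [_root_.map_mul, _root_.map_inv] at h
  rwa [mul_inv_eq_one, mul_inv_eq_iff_eq_mul] at h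

theorem vl_y_far (i j : Fin (m + 1)) (hij : (i : ℕ) + 2 ≤ j) :
    (yG i * pG j : VL (m + 2)) = pG j * yG i := by
  have h := rel_eq_one (m := m) (r := fY i * fP j * (fY i)⁻¹ * (fP j)⁻¹)
    (Or.inr (Or.inr (Or.inr (Or.inl ⟨i, j, Or.inl hij, rfl⟩))))
  simp only [_root_.map_mul, _root_.map_inv] at h
  rwa [mul_inv_eq_one, mul_inv_eq_iff_eq_mul] at h

theorem vl_p_braid (i j : Fin (m + 1)) (hij : (j : ℕ) = i + 1) :
    (pG i * pG j * pG i : VL (m + 2)) = pG j * pG i * pG j := by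
  have h := rel_eq_one (m := m) (r := fP i * fP j * fP i * (fP j * fP i * fP j)⁻¹)
    (Or.inr (Or.inr (Or.inr (Or.inr (Or.inr (Or.inl ⟨i, j, hij, rfl⟩))))))
  rwa [_root_.map_mul, _root_.map_inv, mul_inv_eq_one] at h

theorem vl_mixed (i j : Fin (m + 1)) (hij : (j : ℕ) = i + 1) :
    (pG i * yG j * pG i : VL (m + 2)) = pG j * yG i * pG j := by
  have h := rel_eq_one (m := m) (r := fP i * fY j * fP i * (fP j * fY i * fP j)⁻¹)
    (Or.inr (Or.inr (Or.inr (Or.inr (Or.inr (Or.inr ⟨i, j, hij, rfl⟩))))))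
  rwa [_root_.map_mul, _root_.map_inv, mul_inv_eq_one] at h

theorem vl_closure :
    Subgroup.closure (Set.range (fun i : Fin (m + 1) => (yG i : VL (m + 2))) ∪
      Set.range (fun i : Fin (m + 1) => (pG i : VL (m + 2)))) = ⊤ := by
  rw [eq_top_iff, ← PresentedGroup.closure_range_of (vlRels (m + 2)), Subgroup.closure_le]
  rintro _ ⟨i | i, rfl⟩
  · exact Subgroup.subset_closure (Or.inl ⟨i, rfl⟩)
  · exact Subgroup.subset_closure (Or.inr ⟨i, rfl⟩)

/-- The values on generators `y i ↦ (D i (i + 1), s i)`, `ρ i ↦ (0, s i)` in the model. -/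
def modelGen : VLGen (m + 2) → Model (m + 2) :=
  Sum.elim (fun i : Fin (m + 1) => mY i.castSucc i.succ)
    (fun i : Fin (m + 1) => mR i.castSucc i.succ)

theorem modelGen_rels : ∀ r ∈ vlRels (m + 2), FreeGroup.lift (modelGen (m := m)) r = 1 := by
  have hy : ∀ i : Fin (m + 1), FreeGroup.lift (modelGen (m := m)) (fY i) =
    mY i.castSucc i.succ := fun i => FreeGroup.lift_apply_of
  have hp : ∀ i : Fin (m + 1), FreeGroup.lift (modelGen (m := m)) (fP i) =
    mR i.castSucc i.succ := fun i => FreeGroup.lift_apply_of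
  rintro r (⟨i, rfl⟩ | ⟨i, rfl⟩ | ⟨i, j, h, rfl⟩ | ⟨i, j, h, rfl⟩ | ⟨i, j, h, rfl⟩ |
    ⟨i, j, h, rfl⟩ | ⟨i, j, h, rfl⟩)
  · rw [map_pow, hy, sq, mY_sq]
  · rw [map_pow, hp, sq, mR_sq]
  · simp only [_root_.map_mul, _root_.map_inv, hp]
    rw [mul_inv_eq_one, mul_inv_eq_iff_eq_mul]
    apply mR_far <;> simp [Fin.ext_iff] <;> omega
  · simp only [_root_.map_mul, _root_.map_inv, hp, hy]
    rw [mul_inv_eq_one, mul_inv_eq_iff_eq_mul]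
    apply mY_far <;> simp [Fin.ext_iff] <;> omega
  all_goals
    have e : j.castSucc = i.succ := by simp [Fin.ext_iff, h]
    simp only [_root_.map_mul, _root_.map_inv, hp, hy]
    rw [mul_inv_eq_one, e]
  · apply mY_braid <;> simp [Fin.ext_iff] <;> omega
  · apply mR_braid <;> simp [Fin.ext_iff] <;> omega
  · apply mix_braid <;> simp [Fin.ext_iff] <;> omega

/-- The homomorphism from the virtual triplet group to the semidirect product model. -/
def toModel : VL (m + 2) →* Model (m + 2) := PresentedGroup.toGroup modelGen_rels

theorem toModel_y (i : Fin (m + 1)) : toModel (yG i) = mY (i.castSucc : Fin (m + 2)) i.succ :=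
  PresentedGroup.toGroup.of modelGen_rels

theorem toModel_p (i : Fin (m + 1)) : toModel (pG i) = mR (i.castSucc : Fin (m + 2)) i.succ :=
  PresentedGroup.toGroup.of modelGen_rels

end VLfacts

/-! ### Freeness of the lattice -/

theorem card_lt_pairs (n : ℕ) :
    Fintype.card {p : Fin n × Fin n // p.1 < p.2} = n * (n - 1) / 2 := by
  rw [Fintype.card_subtype, ← Nat.choose_two_right, Fintype.card_product_filter_lt,
    Fintype.card_fin]

/-- An abelian group `A` generated by elements `λ i j` (`i < j`) that map to the antisymmetric vectors
`D i j` is free abelian on them: reading off the coordinates `(i, j)` with `i < j` of the image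
recovers the exponents. -/
theorem freeness {m : ℕ} {Q : Type*} [Group Q] (A : Subgroup Q)
    (comm : ∀ a ∈ A, ∀ b ∈ A, a * b = b * a)
    (F : Q →* Model (m + 2)) (hF : ∀ a ∈ A, (F a).right = 1)
    (lam : Fin (m + 2) → Fin (m + 2) → Q) (hlam : ∀ i j, i < j → lam i j ∈ A)
    (hFlam : ∀ i j, i < j → F (lam i j) = SemidirectProduct.inl (D i j))
    (gen : A ≤ Subgroup.closure {x | ∃ i j, i < j ∧ lam i j = x}) :
    Nonempty (A ≃* Multiplicative (Fin ((m + 2) * (m + 2 - 1) / 2) → ℤ)) := by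
  classical
  let _ : CommGroup A :=
    { (inferInstance : Group A) with
      mul_comm := fun a b => Subtype.ext (comm a a.2 b b.2) }
  let I := {p : Fin (m + 2) × Fin (m + 2) // p.1 < p.2}
  let e : I ≃ Fin ((m + 2) * (m + 2 - 1) / 2) :=
    Fintype.equivFinOfCardEq (card_lt_pairs (m + 2))
  let lamA : I → A := fun p => ⟨lam p.1.1 p.1.2, hlam _ _ p.2⟩
  let g : Multiplicative (Fin ((m + 2) * (m + 2 - 1) / 2) → ℤ) →* A :=
    MonoidHom.mk' (fun x => ∏ p : I, lamA p ^ (x.toAdd (e p))) (fun x y => by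
      simp only [toAdd_mul, Pi.add_apply, zpow_add, Finset.prod_mul_distrib])
  let θ : A →* (Fin (m + 2) × Fin (m + 2) → Multiplicative ℤ) :=
    MonoidHom.mk' (fun a => (F a).left) (fun a b => by
      rw [Subgroup.coe_mul, _root_.map_mul, SemidirectProduct.mul_left, hF a a.2, _root_.map_one,
        MulAut.one_apply])
  have hθ : ∀ p, θ (lamA p) = D p.1.1 p.1.2 := fun p => by
    change (F (lam p.1.1 p.1.2)).left = _
    rw [hFlam _ _ p.2, SemidirectProduct.left_inl]
  refine ⟨(MulEquiv.ofBijective g ⟨?_, ?_⟩).symm⟩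
  · have key : ∀ x (q : I), θ (g x) q.1 = Multiplicative.ofAdd (x.toAdd (e q)) := by
      intro x q
      have : θ (g x) = ∏ p : I, D p.1.1 p.1.2 ^ (x.toAdd (e p)) := by
        change θ (∏ p : I, lamA p ^ (x.toAdd (e p))) = _
        simp only [map_prod, map_zpow, hθ]
      rw [this, Finset.prod_apply, Finset.prod_eq_single q]
      · rw [Pi.pow_apply, show q.1 = (q.1.1, q.1.2) from rfl, D_apply_self q.2.ne, ← ofAdd_zsmul]
        simp
      · intro p _ hpq
        rw [Pi.pow_apply, show q.1 = (q.1.1, q.1.2) from rfl, D_apply_of_lt p.2 q.2, if_neg,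
          one_zpow]
        exact fun h => hpq (Subtype.ext h.symm)
      · simp
    intro x y hxy
    apply Multiplicative.toAdd.injective
    funext k
    have := (key x (e.symm k)).symm.trans
      ((congrArg (fun a => θ a (e.symm k).1) hxy).trans (key y (e.symm k)))
    simpa using this
  · have hle : A ≤ g.range.map A.subtype := by
      refine gen.trans ((Subgroup.closure_le _).mpr ?_)
      rintro _ ⟨i, j, h, rfl⟩
      refine ⟨lamA ⟨(i, j), h⟩, ⟨Multiplicative.ofAdd (Pi.single (e ⟨(i, j), h⟩) 1), ?_⟩, rfl⟩
      change ∏ p : I, lamA p ^ ((Pi.single (e ⟨(i, j), h⟩) (1 : ℤ) : _ → ℤ) (e p)) = _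
      rw [Finset.prod_eq_single ⟨(i, j), h⟩]
      · simp
      · intro p _ hp
        rw [Pi.single_eq_of_ne (e.injective.ne hp), zpow_zero]
      · simp
    rintro ⟨a, ha⟩
    obtain ⟨b, ⟨x, hx⟩, hb⟩ := hle ha
    exact ⟨x, hx.trans (Subtype.ext hb)⟩

end VLaux

/-- Let `π : VL n → S n` be the epimorphism sending both `yᵢ` and `ρᵢ`
to the transposition `(i, i+1)`, so `PVL n = ker π` and `PVL n' = ⁅ker π, ker π⁆`.
Then `π` induces a split short exact sequence
`1 → PVL n/PVL n' → VL n/PVL n' → S n → 1`, the abelianisation `PVL n/PVL n'` is free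
abelian of rank `n(n-1)/2`, and the conjugation action of `S n` on it is faithful; hence
`VL n/PVL n'` is a crystallographic group of dimension `n(n-1)/2` with holonomy `S n`. -/
theorem stmt17 (n : ℕ) (hn : 2 ≤ n) (π : VL n →* Equiv.Perm (Fin n))
    (hπy : ∀ i : Fin (n - 1), π (yG i) =
      Equiv.swap (Fin.castLE (Nat.sub_le n 1) i) ⟨(i : ℕ) + 1, by have := i.isLt; omega⟩)
    (hπp : ∀ i : Fin (n - 1), π (pG i) =
      Equiv.swap (Fin.castLE (Nat.sub_le n 1) i) ⟨(i : ℕ) + 1, by have := i.isLt; omega⟩) :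
    ∃ πb : (VL n ⧸ ⁅π.ker, π.ker⁆) →* Equiv.Perm (Fin n),
      πb.comp (QuotientGroup.mk' ⁅π.ker, π.ker⁆) = π ∧
      Function.Surjective πb ∧
      πb.ker = π.ker.map (QuotientGroup.mk' ⁅π.ker, π.ker⁆) ∧
      (∃ σ : Equiv.Perm (Fin n) →* VL n ⧸ ⁅π.ker, π.ker⁆,
        πb.comp σ = MonoidHom.id (Equiv.Perm (Fin n))) ∧
      Nonempty (↥πb.ker ≃* Multiplicative (Fin (n * (n - 1) / 2) → ℤ)) ∧
      (∀ g : VL n ⧸ ⁅π.ker, π.ker⁆, (∀ x ∈ πb.ker, g * x * g⁻¹ = x) → g ∈ πb.ker) := by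
  obtain ⟨m, rfl⟩ : ∃ m, n = m + 2 := ⟨n - 2, by omega⟩
  have hy : ∀ i : Fin (m + 1), π (yG i) = Equiv.swap i.castSucc i.succ := hπy
  have hp : ∀ i : Fin (m + 1), π (pG i) = Equiv.swap i.castSucc i.succ := hπp
  clear hπy hπp hn
  -- the splitting already exists before passing to the quotient
  obtain ⟨s, hs, hπs⟩ := VLaux.exists_section (fun i : Fin (m + 1) => (pG i : VL (m + 2)))
    VLaux.vl_p_sq VLaux.vl_p_far VLaux.vl_p_braid π hp
  have hright : ∀ x, (VLaux.toModel x).right = π x := by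
    have : SemidirectProduct.rightHom.comp VLaux.toModel = π := by
      refine MonoidHom.eq_of_eqOn_dense VLaux.vl_closure ?_
      rintro _ (⟨i, rfl⟩ | ⟨i, rfl⟩)
      · rw [MonoidHom.comp_apply, VLaux.toModel_y, hy]; rfl
      · rw [MonoidHom.comp_apply, VLaux.toModel_p, hp]; rfl
    exact fun x => DFunLike.congr_fun this x
  -- the kernel of `π` maps into the abelian factor of the model, so the model kills `K'`
  set K' := ⁅π.ker, π.ker⁆ with hK'
  have hK : K' ≤ π.ker := Subgroup.commutator_le_left _ _
  have hKmodel : K' ≤ VLaux.toModel.ker := by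
    rw [hK', Subgroup.commutator_le]
    intro a ha b hb
    rw [MonoidHom.mem_ker] at ha hb ⊢
    rw [map_commutatorElement, commutatorElement_eq_one_iff_mul_comm]
    ext1
    · simp only [SemidirectProduct.mul_left, hright, ha, hb, _root_.map_one, MulAut.one_apply]
      exact mul_comm _ _
    · simp only [SemidirectProduct.mul_right, hright, ha, hb]
  let q := QuotientGroup.mk' K'
  have hqs : Function.Surjective q := QuotientGroup.mk'_surjective K'
  let πb : VL (m + 2) ⧸ K' →* Equiv.Perm (Fin (m + 2)) := QuotientGroup.lift K' π hK
  let F : VL (m + 2) ⧸ K' →* VLaux.Model (m + 2) := QuotientGroup.lift K' VLaux.toModel hKmodel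
  have hπbq : ∀ x, πb (q x) = π x := fun x => rfl
  have hFq : ∀ x, F (q x) = VLaux.toModel x := fun x => rfl
  let σ : Equiv.Perm (Fin (m + 2)) →* VL (m + 2) ⧸ K' := q.comp s
  have hσ : ∀ i : Fin (m + 1), σ (Equiv.swap i.castSucc i.succ) = q (pG i) :=
    fun i => congrArg q (hs i)
  have hπσ : ∀ w, πb (σ w) = w := hπs
  have hFright : ∀ x, (F x).right = πb x := fun x => by
    obtain ⟨x, rfl⟩ := hqs x
    exact hright x
  obtain ⟨lam, equi, anti, simple⟩ := VLaux.exists_lam (fun i : Fin (m + 1) => q (yG i))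
    (fun i => q (pG i)) σ hσ
    (fun i => by rw [← _root_.map_mul, VLaux.vl_y_sq, _root_.map_one])
    (fun i => by rw [← _root_.map_mul, VLaux.vl_p_sq, _root_.map_one])
    (fun i j h => by rw [← _root_.map_mul, ← _root_.map_mul, VLaux.vl_p_far i j h])
    (fun i j h => by rw [← _root_.map_mul, ← _root_.map_mul, VLaux.vl_y_far i j h])
    (fun i j h => by simp only [← _root_.map_mul, VLaux.vl_p_braid i j h])
    (fun i j h => by simp only [← _root_.map_mul, VLaux.vl_mixed i j h])
  have hFσ : ∀ w, F (σ w) = SemidirectProduct.inr w := by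
    have : F.comp σ = SemidirectProduct.inr := by
      refine MonoidHom.eq_of_eqOn_denseM
        (Equiv.Perm.mclosure_swap_castSucc_succ (m + 1)) ?_
      rintro _ ⟨i, rfl⟩
      simp only [MonoidHom.comp_apply]
      rw [hσ, hFq, VLaux.toModel_p]
      rfl
    exact fun w => DFunLike.congr_fun this w
  have hFlam : ∀ i j, i ≠ j → F (lam i j) = SemidirectProduct.inl (VLaux.D i j) := by
    intro i j h
    obtain ⟨w, rfl, rfl⟩ := VLaux.exists_perm i j h
    have h0 : F (lam 0 1) = SemidirectProduct.inl (VLaux.D 0 1) := by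
      have := simple 0
      rw [Fin.castSucc_zero, Fin.succ_zero_eq_one] at this
      rw [this, _root_.map_mul, hFq, hFq, VLaux.toModel_y, VLaux.toModel_p]
      ext1 <;> simp [VLaux.mY, VLaux.mR]
    rw [← equi w 0 1 (by simp), _root_.map_mul, _root_.map_mul, _root_.map_inv, hFσ, h0,
      ← VLaux.act_D, SemidirectProduct.inl_aut, _root_.map_inv]
  have hlam : ∀ i j, i ≠ j → lam i j ∈ πb.ker := by
    intro i j h
    rw [MonoidHom.mem_ker, ← hFright, hFlam i j h, SemidirectProduct.right_inl]
  have hker : πb.ker = π.ker.map q := QuotientGroup.ker_lift K' π hK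
  refine ⟨πb, MonoidHom.ext hπbq, fun w => ⟨σ w, hπσ w⟩, hker, ⟨σ, MonoidHom.ext hπσ⟩, ?_, ?_⟩
  · refine VLaux.freeness πb.ker ?_ F ?_ lam (fun i j h => hlam i j h.ne)
      (fun i j h => hFlam i j h.ne) ?_
    · rw [hker]
      rintro _ ⟨a, ha, rfl⟩ _ ⟨b, hb, rfl⟩
      rw [← commutatorElement_eq_one_iff_mul_comm, ← map_commutatorElement]
      exact (QuotientGroup.eq_one_iff _).mpr (Subgroup.commutator_mem_commutator ha hb)
    · exact fun a ha => (hFright a).trans ha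
    · intro a ha
      have := VLaux.mem_closure_lam (fun i : Fin (m + 1) => q (yG i)) (fun i => q (pG i)) σ hσ
        (fun i => by rw [← _root_.map_mul, VLaux.vl_p_sq, _root_.map_one]) lam equi anti simple πb hy hp
        (by
          have h := congrArg (Subgroup.map q) (VLaux.vl_closure (m := m))
          rwa [MonoidHom.map_closure, Set.image_union, ← Set.range_comp, ← Set.range_comp,
            Subgroup.map_top_of_surjective q hqs] at h) a
      rwa [MonoidHom.mem_ker.mp ha, _root_.map_one, inv_one, mul_one] at this
  · intro g hg
    rw [MonoidHom.mem_ker]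
    -- applying `F` to `g * λ i j = λ i j * g` gives `D (w i) (w j) = D i j` for `w = πb g`
    have key : ∀ i j, i ≠ j → πb g i = i ∧ πb g j = j := by
      intro i j h
      have h1 := congrArg F (mul_inv_eq_iff_eq_mul.mp (hg _ (hlam i j h)))
      rw [_root_.map_mul, _root_.map_mul, hFlam i j h] at h1
      have h2 := congrArg SemidirectProduct.left h1
      rw [SemidirectProduct.mul_left, SemidirectProduct.mul_left, SemidirectProduct.left_inl,
        SemidirectProduct.right_inl, _root_.map_one, MulAut.one_apply, mul_comm (VLaux.D i j),
        hFright, VLaux.act_D] at h2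
      exact VLaux.eq_of_D_eq h (mul_left_cancel h2)
    ext i
    obtain ⟨j, hj⟩ := exists_ne i
    rw [(key i j hj.symm).1, Equiv.Perm.one_apply]
end
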